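/- arXiv:1210.5838 — 2 statements merged into one kernel-verified Lean document; each statement's English description precedes it below -/
import Mathlib

section
/- Let K be a finite extension of ℚ_p with residue field 𝔽, let 𝔽̄ be an algebraic closure of 𝔽, and L ∈ M_g(𝔽). Let ρ be the rank of the matrix L·L^{(p)}⋯L^{(p^{g−1})}, where L^{(p^i)} is obtained from L by raising all entries to the p^i-th power. Then the number of vectors u ∈ 𝔽̄^g satisfying u + L·u^{(p)} = 0 (where u^{(p)} raises each coordinate to the p-th power) is exactly p^ρ. -/
/-!
The solutions of `u + L u^{(p)} = 0` are the fixed points of the Frobenius-semilinear map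
`φ : u ↦ -L u^{(p)}`. For any such `φ` on a finite-dimensional space over a separably closed field,
fixed points independent over the prime field stay independent over the big one, so there are
`p ^ d` of them, `d` being the dimension of their span `S`. On the quotient by `S` the induced map
has no nonzero fixed point (Artin–Schreier), and this forces it to be nilpotent: on a cyclic
subspace, a relation between the iterates of a vector with a nonzero coefficient turns the search
for a fixed point into a separable equation in one unknown. Hence `S` is spanned by the image of
`φ^g`, which up to sign is `u ↦ L L^{(p)} ⋯ L^{(p^{g-1})} u^{(p^g)}`.
-/

open Polynomial Matrix Function

section SeparablyClosed

variable {k : Type*} [Field k] [IsSepClosed k] {f : k[X]}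

theorem exists_sub_eval_eq_of_derivative_eq_zero (hf : derivative f = 0) (c : k) :
    ∃ y, y - f.eval y = c := by
  have hder : derivative (X - f - C c) = 1 := by simp [hf]
  have hdeg : (X - f - C c).degree ≠ 0 := fun h => by
    rw [eq_C_of_degree_eq_zero h, derivative_C] at hder
    exact zero_ne_one hder
  have hsep : (X - f - C c).Separable := by
    rw [separable_def, hder]
    exact isCoprime_one_right
  obtain ⟨y, hy⟩ := IsSepClosed.exists_root _ hdeg hsep
  exact ⟨y, by simpa [sub_eq_zero] using hy⟩

theorem exists_ne_zero_eval_eq_self_of_derivative_eq_zero (hf : derivative f = 0) (hX : X ∣ f)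
    (hf0 : f ≠ 0) : ∃ y ≠ 0, f.eval y = y := by
  obtain ⟨q, rfl⟩ := hX
  have hq : q + X * derivative q = 0 := by simpa using hf
  have hdeg : (q - 1).degree ≠ 0 := fun h => by
    have hqC : q = C ((q - 1).coeff 0 + 1) := by
      rw [C_add, ← eq_C_of_degree_eq_zero h, C_1, sub_add_cancel]
    have hq0 : q = 0 := by
      rw [hqC] at hq ⊢
      simpa using hq
    exact hf0 (by rw [hq0, mul_zero])
  have hsep : (q - 1).Separable := by
    refine Separable.of_mul_right (f := X) ?_
    have hder : derivative (X * (q - 1)) = -1 := by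
      simp only [derivative_mul, derivative_X, derivative_sub, derivative_one]
      linear_combination hq
    rw [separable_def, hder]
    exact isCoprime_one_right.neg_right
  obtain ⟨y, hy⟩ := IsSepClosed.exists_root _ hdeg hsep
  have hqy : q.eval y = 1 := by simpa [sub_eq_zero] using hy
  refine ⟨y, ?_, by simp [hqy]⟩
  rintro rfl
  simpa [hqy] using congrArg (Polynomial.eval 0) hq

end SeparablyClosed

section CyclicFixedPoly

variable {R : Type*} [CommSemiring R] (p : ℕ)

/-- Suppose `φ^{n+1} v = ∑_{i ≤ n} a_i φ^i v` for a Frobenius-semilinear map `φ` and a vector `v`.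
Comparing coefficients, `∑_{i ≤ n} c_i φ^i v` with `c_n = y` is fixed by `φ` as soon as
`c_0 = a_0 y^p` and `c_{i+1} = c_i^p + a_{i+1} y^p`; the polynomial `cyclicFixedPoly p a i`
expresses `c_i` in terms of the unknown `y`, which is subject to the single equation `c_n = y`. -/
noncomputable def cyclicFixedPoly (a : ℕ → R) : ℕ → R[X]
  | 0 => C (a 0) * X ^ p
  | i + 1 => cyclicFixedPoly a i ^ p + C (a (i + 1)) * X ^ p

theorem derivative_cyclicFixedPoly [CharP R p] (a : ℕ → R) :
    ∀ i, derivative (cyclicFixedPoly p a i) = 0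
  | 0 => by simp [cyclicFixedPoly, derivative_X_pow]
  | i + 1 => by simp [cyclicFixedPoly, derivative_pow]

theorem X_pow_dvd_cyclicFixedPoly (hp : p ≠ 0) (a : ℕ → R) :
    ∀ i, X ^ p ∣ cyclicFixedPoly p a i
  | 0 => dvd_mul_left _ _
  | i + 1 => dvd_add (dvd_pow (X_pow_dvd_cyclicFixedPoly hp a i) hp) (dvd_mul_left _ _)

theorem coeff_eq_zero_of_cyclicFixedPoly_eq_zero [NoZeroDivisors R] (hp : 1 < p) (a : ℕ → R)
    {i : ℕ} (h : cyclicFixedPoly p a i = 0) : ∀ j ≤ i, a j = 0 := by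
  induction i with
  | zero =>
    have ha : a 0 = 0 := by simpa [cyclicFixedPoly] using congrArg (coeff · p) h
    rintro _ hj
    rwa [Nat.le_zero.1 hj]
  | succ i ih =>
    have hdvd : X ^ (p * p) ∣ cyclicFixedPoly p a i ^ p := by
      rw [pow_mul]
      exact pow_dvd_pow_of_dvd (X_pow_dvd_cyclicFixedPoly p (by lia) a i) p
    have hcoeff : (cyclicFixedPoly p a i ^ p).coeff p = 0 :=
      X_pow_dvd_iff.1 hdvd p (lt_mul_self hp)
    have ha : a (i + 1) = 0 := by
      simpa [cyclicFixedPoly, hcoeff] using congrArg (coeff · p) h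
    have hpow : cyclicFixedPoly p a i ^ p = 0 := by simpa [cyclicFixedPoly, ha] using h
    intro j hj
    rcases Nat.le_succ_iff.1 hj with hj | rfl
    exacts [ih (eq_zero_of_pow_eq_zero hpow) j hj, ha]

theorem exists_ne_zero_eval_cyclicFixedPoly_eq_self {k : Type*} [Field k] [IsSepClosed k]
    [Fact p.Prime] [CharP k p] (a : ℕ → k) {n j : ℕ} (hj : j ≤ n) (ha : a j ≠ 0) :
    ∃ y ≠ 0, (cyclicFixedPoly p a n).eval y = y := by
  have hp : p.Prime := Fact.out
  exact exists_ne_zero_eval_eq_self_of_derivative_eq_zero (derivative_cyclicFixedPoly p a n)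
    ((dvd_pow_self X hp.ne_zero).trans (X_pow_dvd_cyclicFixedPoly p hp.ne_zero a n))
    fun h => ha (coeff_eq_zero_of_cyclicFixedPoly_eq_zero p hp.one_lt a h j hj)

variable {S V : Type*} [CommRing S] [ExpChar S p] [AddCommGroup V] [Module S V]
  (φ : V →ₛₗ[frobenius S p] V)

theorem map_sum_eval_cyclicFixedPoly_smul_iterate (a : ℕ → S) (y : S) (v : V) (n : ℕ) :
    φ (∑ i ∈ Finset.range (n + 1), (cyclicFixedPoly p a i).eval y • φ^[i] v) +
        y ^ p • ∑ i ∈ Finset.range (n + 1), a i • φ^[i] v =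
      ∑ i ∈ Finset.range (n + 1), (cyclicFixedPoly p a i).eval y • φ^[i] v +
        (cyclicFixedPoly p a n).eval y ^ p • φ^[n + 1] v := by
  induction n with
  | zero =>
    simp only [zero_add, Finset.sum_range_one, cyclicFixedPoly, eval_mul, eval_C, eval_pow, eval_X,
      iterate_zero_apply, iterate_one, map_smulₛₗ, frobenius_def]
    module
  | succ n ih =>
    have hsucc : (cyclicFixedPoly p a (n + 1)).eval y =
        (cyclicFixedPoly p a n).eval y ^ p + a (n + 1) * y ^ p := by simp [cyclicFixedPoly]
    rw [Finset.sum_range_succ _ (n + 1), Finset.sum_range_succ (fun i => a i • φ^[i] v) (n + 1),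
      map_add, map_smulₛₗ, frobenius_def, ← iterate_succ_apply' φ]
    linear_combination (norm := module) ih - hsucc • φ^[n + 1] v

theorem isFixedPt_sum_eval_cyclicFixedPoly_smul_iterate {a : ℕ → S} {y : S} {v : V} {n : ℕ}
    (hv : φ^[n + 1] v = ∑ i ∈ Finset.range (n + 1), a i • φ^[i] v)
    (hy : (cyclicFixedPoly p a n).eval y = y) :
    IsFixedPt φ (∑ i ∈ Finset.range (n + 1), (cyclicFixedPoly p a i).eval y • φ^[i] v) := by
  have h := map_sum_eval_cyclicFixedPoly_smul_iterate p φ a y v n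
  rwa [hy, hv, add_left_inj] at h

end CyclicFixedPoly

section Semilinear

theorem span_fixedPoints_le_comap {R V : Type*} [Semiring R] [AddCommMonoid V] [Module R V]
    {σ : R →+* R} (φ : V →ₛₗ[σ] V) :
    Submodule.span R (fixedPoints φ) ≤ (Submodule.span R (fixedPoints φ)).comap φ :=
  Submodule.span_le.2 fun x hx => by
    rw [SetLike.mem_coe, Submodule.mem_comap, hx]
    exact Submodule.subset_span hx

theorem isFixedPt_sum_smul_iff {R V : Type*} [Ring R] [AddCommGroup V] [Module R V]
    {σ : R →+* R} (φ : V →ₛₗ[σ] V) {ι : Type*} [Fintype ι] {b : ι → V}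
    (hb : LinearIndependent R b) (hfix : ∀ i, IsFixedPt φ (b i)) (c : ι → R) :
    IsFixedPt φ (∑ i, c i • b i) ↔ ∀ i, σ (c i) = c i := by
  have hφ : φ (∑ i, c i • b i) = ∑ i, σ (c i) • b i := by
    simp only [map_sum, map_smulₛₗ, (hfix _).eq]
  rw [IsFixedPt, hφ, ← funext_iff]
  exact hb.fintypeLinearCombination_injective.eq_iff (a := fun i => σ (c i)) (b := c)

end Semilinear

section FrobeniusSemilinear

variable {k V : Type*} [Field k] [AddCommGroup V] [Module k V]

theorem exists_linearIndependent_iterate_mem_span [FiniteDimensional k V] (f : V → V) (v : V) :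
    ∃ m, LinearIndependent k (fun i : Fin m => f^[i] v) ∧
      f^[m] v ∈ Submodule.span k (Set.range fun i : Fin m => f^[i] v) := by
  by_contra! h
  have hli : ∀ m, LinearIndependent k (fun i : Fin m => f^[i] v) := by
    intro m
    induction m with
    | zero => exact linearIndependent_empty_type
    | succ m ih => exact linearIndependent_finSucc'.2 ⟨ih, h m ih⟩
  simpa using (hli (Module.finrank k V + 1)).fintype_card_le_finrank

variable (p : ℕ) [Fact p.Prime] [CharP k p] (φ : V →ₛₗ[frobenius k p] V)

theorem iterate_finrank_eq_zero_of_isFixedPt_imp_eq_zero [IsSepClosed k] [FiniteDimensional k V]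
    (hφ : ∀ x, IsFixedPt φ x → x = 0) (v : V) : φ^[Module.finrank k V] v = 0 := by
  obtain ⟨m, hli, hmem⟩ := exists_linearIndependent_iterate_mem_span (k := k) φ v
  obtain ⟨a, ha⟩ : ∃ a : ℕ → k, φ^[m] v = ∑ i ∈ Finset.range m, a i • φ^[i] v := by
    obtain ⟨b, hb⟩ := (Submodule.mem_span_range_iff_exists_fun k).1 hmem
    exact ⟨fun i => if h : i < m then b ⟨i, h⟩ else 0, by simp [← hb, Finset.sum_range]⟩
  have ha0 : ∀ j < m, a j = 0 := by
    by_contra! ⟨j, hj, haj⟩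
    obtain ⟨n, rfl⟩ := Nat.exists_eq_add_one_of_ne_zero (Nat.ne_zero_of_lt hj)
    obtain ⟨y, hy0, hy⟩ :=
      exists_ne_zero_eval_cyclicFixedPoly_eq_self p a (Nat.le_of_lt_succ hj) haj
    have hsum := hφ _ (isFixedPt_sum_eval_cyclicFixedPoly_smul_iterate p φ ha hy)
    rw [Finset.sum_range] at hsum
    have hlast := Fintype.linearIndependent_iff.1 hli _ hsum (Fin.last n)
    exact hy0 (hy ▸ hlast)
  have hm : φ^[m] v = 0 := by
    rw [ha]
    exact Finset.sum_eq_zero fun i hi => by rw [ha0 i (Finset.mem_range.1 hi), zero_smul]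
  have hle : m ≤ Module.finrank k V := by simpa using hli.fintype_card_le_finrank
  rw [← Nat.sub_add_cancel hle, iterate_add_apply, hm]
  exact iterate_fixed (map_zero φ) _

theorem exists_sub_map_eq_of_mem_span_fixedPoints [IsSepClosed k] {s : V}
    (hs : s ∈ Submodule.span k (fixedPoints φ)) :
    ∃ t ∈ Submodule.span k (fixedPoints φ), t - φ t = s := by
  induction hs using Submodule.closure_induction with
  | zero => exact ⟨0, zero_mem _, by simp⟩
  | add x y _ _ hx hy =>
    obtain ⟨s, hs, rfl⟩ := hx
    obtain ⟨t, ht, rfl⟩ := hy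
    exact ⟨s + t, add_mem hs ht, by rw [map_add]; abel⟩
  | smul_mem c x hx =>
    have hder : derivative (X ^ p : k[X]) = 0 := by simp [derivative_X_pow]
    obtain ⟨d, hd⟩ := exists_sub_eval_eq_of_derivative_eq_zero hder c
    refine ⟨d • x, Submodule.smul_mem _ _ (Submodule.subset_span hx), ?_⟩
    rw [map_smulₛₗ, hx, frobenius_def, ← sub_smul, ← hd, eval_pow, eval_X]

theorem eq_zero_of_isFixedPt_mapQ_span_fixedPoints [IsSepClosed k]
    {x : V ⧸ Submodule.span k (fixedPoints φ)}
    (hx : IsFixedPt (Submodule.mapQ _ _ φ (span_fixedPoints_le_comap φ)) x) : x = 0 := by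
  obtain ⟨v, rfl⟩ := Submodule.mkQ_surjective _ x
  obtain ⟨t, ht, htv⟩ :=
    exists_sub_map_eq_of_mem_span_fixedPoints p φ ((Submodule.Quotient.eq _).1 hx)
  have hvt : φ (v + t) = v + t := by
    rw [map_add, add_comm v, ← sub_eq_sub_iff_add_eq_add, ← htv]
  exact (Submodule.Quotient.mk_eq_zero _).2
    ((Submodule.add_mem_iff_left _ ht).1 (Submodule.subset_span hvt))

theorem iterate_finrank_mem_span_fixedPoints [IsSepClosed k] [FiniteDimensional k V] (v : V) :
    φ^[Module.finrank k V] v ∈ Submodule.span k (fixedPoints φ) := by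
  set S := Submodule.span k (fixedPoints φ)
  have hS : S ≤ S.comap φ := span_fixedPoints_le_comap φ
  have hquot : φ^[Module.finrank k (V ⧸ S)] v ∈ S := by
    have hsemi : Semiconj S.mkQ φ (S.mapQ S φ hS) := fun _ => rfl
    rw [← Submodule.Quotient.mk_eq_zero, ← Submodule.mkQ_apply, (hsemi.iterate_right _).eq]
    exact iterate_finrank_eq_zero_of_isFixedPt_imp_eq_zero p _
      (fun x => eq_zero_of_isFixedPt_mapQ_span_fixedPoints p φ) _
  rw [← Nat.sub_add_cancel S.finrank_quotient_le, iterate_add_apply]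
  exact Set.MapsTo.iterate (f := φ) (s := (S : Set V)) hS _ hquot

theorem span_fixedPoints_eq_span_range_iterate_finrank [IsSepClosed k] [FiniteDimensional k V] :
    Submodule.span k (fixedPoints φ) = Submodule.span k (Set.range φ^[Module.finrank k V]) := by
  refine le_antisymm (Submodule.span_mono fun x hx => ⟨x, iterate_fixed hx _⟩) ?_
  rw [Submodule.span_le, Set.range_subset_iff]
  exact iterate_finrank_mem_span_fixedPoints p φ

theorem natCard_fixedPoints_of_linearIndependent {ι : Type*} [Fintype ι] {b : ι → V}
    (hb : LinearIndependent k b) (hfix : ∀ i, IsFixedPt φ (b i))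
    (hspan : fixedPoints φ ⊆ Submodule.span k (Set.range b)) :
    Nat.card (fixedPoints φ) = p ^ Fintype.card ι := by
  let F (c : ι → (⊥ : Subfield k)) : fixedPoints φ :=
    ⟨∑ i, (c i : k) • b i, (isFixedPt_sum_smul_iff φ hb hfix _).2 fun i =>
      (Subfield.mem_bot_iff_pow_eq_self k p).1 (c i).2⟩
  have hinj : Injective F := fun c d h => by
    have hcd := hb.fintypeLinearCombination_injective
      (a₁ := fun i => (c i : k)) (a₂ := fun i => (d i : k)) (congrArg Subtype.val h)
    exact funext fun i => Subtype.ext (congrFun hcd i)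
  have hsurj : Surjective F := by
    rintro ⟨x, hx⟩
    obtain ⟨c, rfl⟩ := (Submodule.mem_span_range_iff_exists_fun k).1 (hspan hx)
    have hc := (isFixedPt_sum_smul_iff φ hb hfix c).1 hx
    exact ⟨fun i => ⟨c i, (Subfield.mem_bot_iff_pow_eq_self k p).2 (hc i)⟩, rfl⟩
  rw [← Nat.card_eq_of_bijective F ⟨hinj, hsurj⟩, Nat.card_fun, Subfield.card_bot k p,
    Nat.card_eq_fintype_card]

theorem natCard_fixedPoints_eq_pow_finrank_span [FiniteDimensional k V] :
    Nat.card (fixedPoints φ) = p ^ Module.finrank k (Submodule.span k (fixedPoints φ)) := by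
  obtain ⟨b, hbfix, hspan, hli⟩ := exists_linearIndependent k (fixedPoints φ)
  have : Fintype b := hli.setFinite.fintype
  have hcard := natCard_fixedPoints_of_linearIndependent p φ hli (fun i => hbfix i.2)
    (by rw [Subtype.range_coe, hspan]; exact Submodule.subset_span)
  rw [hcard, ← hspan, finrank_span_set_eq_card hli, Set.toFinset_card]

theorem natCard_fixedPoints_eq_pow_finrank_span_range_iterate [IsSepClosed k]
    [FiniteDimensional k V] :
    Nat.card (fixedPoints φ) =
      p ^ Module.finrank k (Submodule.span k (Set.range φ^[Module.finrank k V])) := by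
  rw [natCard_fixedPoints_eq_pow_finrank_span, span_fixedPoints_eq_span_range_iterate_finrank]

end FrobeniusSemilinear

section FrobeniusTwist

variable {n R : Type*} [Fintype n] [CommSemiring R] (p : ℕ)

/-- The Frobenius-semilinear map `u ↦ M *ᵥ u^{(p)}`. -/
def frobeniusMulVec [ExpChar R p] (M : Matrix n n R) : (n → R) →ₛₗ[frobenius R p] (n → R) where
  toFun u := M *ᵥ (u ^ p)
  map_add' u w := by
    have hadd : (u + w) ^ p = u ^ p + w ^ p := funext fun i => map_add (frobenius R p) (u i) (w i)
    rw [hadd, mulVec_add]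
  map_smul' c u := by
    rw [_root_.smul_pow, mulVec_smul, frobenius_def]

variable [DecidableEq n]

/-- The twisted power `M * M^{(p)} * ⋯ * M^{(p^{m-1})}`, where `M^{(q)}` raises the entries of `M`
to the `q`-th power: the matrix of the `m`-th iterate of `u ↦ M *ᵥ u^{(p)}`. -/
def frobeniusTwistedPow (M : Matrix n n R) (m : ℕ) : Matrix n n R :=
  ((List.range m).map fun i => M.map fun x => x ^ p ^ i).prod

theorem frobeniusTwistedPow_succ (M : Matrix n n R) (m : ℕ) :
    frobeniusTwistedPow p M (m + 1) =
      frobeniusTwistedPow p M m * M.map fun x => x ^ p ^ m := by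
  simp [frobeniusTwistedPow, List.range_succ]

theorem frobeniusTwistedPow_map {R' : Type*} [CommSemiring R'] (f : R →+* R') (M : Matrix n n R)
    (m : ℕ) : frobeniusTwistedPow p (M.map f) m = (frobeniusTwistedPow p M m).map f := by
  induction m with
  | zero => simp [frobeniusTwistedPow]
  | succ m ih =>
    rw [frobeniusTwistedPow_succ, frobeniusTwistedPow_succ, Matrix.map_mul, ih]
    congr 1
    ext
    simp

theorem frobeniusTwistedPow_neg {S : Type*} [CommRing S] [ExpChar S p] (M : Matrix n n S)
    (m : ℕ) : frobeniusTwistedPow p (-M) m = (-1 : S) ^ m • frobeniusTwistedPow p M m := by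
  induction m with
  | zero => simp [frobeniusTwistedPow]
  | succ m ih =>
    have hneg : ((-M).map fun x => x ^ p ^ m) = -(M.map fun x => x ^ p ^ m) := by
      ext i j
      exact map_neg (iterateFrobenius S p m) (M i j)
    rw [frobeniusTwistedPow_succ, frobeniusTwistedPow_succ, ih, hneg, smul_mul, mul_neg, pow_succ,
      mul_neg_one, neg_smul, smul_neg]

theorem iterate_frobeniusMulVec [ExpChar R p] (M : Matrix n n R) (m : ℕ) (u : n → R) :
    (frobeniusMulVec p M)^[m] u = frobeniusTwistedPow p M m *ᵥ (u ^ p ^ m) := by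
  induction m generalizing u with
  | zero => simp [frobeniusTwistedPow]
  | succ m ih =>
    have hpow : (M *ᵥ (u ^ p)) ^ p ^ m = (M.map fun x => x ^ p ^ m) *ᵥ (u ^ p ^ (m + 1)) := by
      rw [pow_succ' p, pow_mul]
      exact funext fun i => RingHom.map_mulVec (iterateFrobenius R p m) M (u ^ p) i
    rw [iterate_succ_apply, ih, frobeniusTwistedPow_succ, ← mulVec_mulVec, ← hpow]
    rfl

end FrobeniusTwist

section Rank

variable {m n : Type*} [Fintype n]

theorem span_range_mulVec_pow {R : Type*} [CommSemiring R] (A : Matrix m n R) {q : ℕ}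
    (hq : q ≠ 0) :
    Submodule.span R (Set.range fun u : n → R => A *ᵥ (u ^ q)) = LinearMap.range A.mulVecLin := by
  classical
  refine le_antisymm ?_ ?_
  · rw [Submodule.span_le, Set.range_subset_iff]
    exact fun u => ⟨u ^ q, rfl⟩
  · rw [range_mulVecLin, Submodule.span_le, Set.range_subset_iff]
    refine fun j => Submodule.subset_span ⟨Pi.single j 1, ?_⟩
    have hone : (Pi.single j 1 : n → R) ^ q = Pi.single j 1 := by
      ext i
      by_cases h : i = j <;> simp [h, hq]
    simp only [hone, mulVec_single_one]

theorem rank_map_algebraMap [Finite m] {k K : Type*} [Field k] [Field K] [Algebra k K]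
    (A : Matrix m n k) :
    (A.map (algebraMap k K)).rank = A.rank := by
  obtain ⟨κ, a, ha, hspan, hli⟩ := exists_linearIndependent' k A.col
  have : Fintype κ := @Fintype.ofFinite _ (Finite.of_injective a ha)
  have hspan' : Submodule.span K (Set.range (A.map (algebraMap k K)).col) =
      Submodule.span K (Set.range ((A.map (algebraMap k K)).col ∘ a)) := by
    let e : (m → k) →ₗ[k] (m → K) := (Algebra.linearMap k K).compLeft m
    have hspan_image (s : Set (m → k)) :
        Submodule.span K (e '' s) = Submodule.span K (Submodule.map e (Submodule.span k s)) := by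
      rw [← Submodule.span_image, Submodule.span_span_of_tower]
    have hcol : (A.map (algebraMap k K)).col = e ∘ A.col := rfl
    rw [hcol, comp_assoc, Set.range_comp e, Set.range_comp e, hspan_image, hspan_image, hspan]
  have hli' : LinearIndependent K ((A.map (algebraMap k K)).col ∘ a) :=
    linearIndependent_algebraMap_comp_iff.2 hli
  rw [rank_eq_finrank_span_cols, rank_eq_finrank_span_cols, ← hspan, hspan',
    finrank_span_eq_card hli, finrank_span_eq_card hli']

end Rank

theorem hasse_witt_count_general
    (p : ℕ) [Fact p.Prime] {n : Type*} [Fintype n] [DecidableEq n]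
    {k : Type*} [Field k] [CharP k p]
    (Ω : Type*) [Field Ω] [Algebra k Ω] [IsSepClosed Ω] (L : Matrix n n k) :
    Nat.card {u : n → Ω //
        ∀ i, u i + (L.map (algebraMap k Ω)).mulVec (fun j => u j ^ p) i = 0} =
      p ^ (frobeniusTwistedPow p L (Fintype.card n)).rank := by
  have : CharP Ω p := charP_of_injective_algebraMap (algebraMap k Ω).injective p
  set M := L.map (algebraMap k Ω) with hM
  have hfixed : ∀ u : n → Ω, (∀ i, u i + (M *ᵥ (u ^ p)) i = 0) ↔
      u ∈ fixedPoints (frobeniusMulVec p (-M)) := fun u => by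
    have hneg : frobeniusMulVec p (-M) u = -(M *ᵥ (u ^ p)) := neg_mulVec _ _
    rw [mem_fixedPoints, IsFixedPt, hneg, eq_comm, eq_neg_iff_add_eq_zero]
    exact funext_iff.symm
  have hq : p ^ Fintype.card n ≠ 0 := pow_ne_zero _ (NeZero.ne p)
  have hsign : (-1 : Ω) ^ Fintype.card n ∈ nonZeroDivisors Ω := by simp
  calc
    _ = Nat.card (fixedPoints (frobeniusMulVec p (-M))) :=
      Nat.card_congr (Equiv.subtypeEquivRight hfixed)
    _ = p ^ (frobeniusTwistedPow p (-M) (Fintype.card n)).rank := by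
      rw [natCard_fixedPoints_eq_pow_finrank_span_range_iterate, Module.finrank_fintype_fun_eq_card,
        funext (iterate_frobeniusMulVec p (-M) _), span_range_mulVec_pow _ hq, Matrix.rank]
    _ = p ^ (frobeniusTwistedPow p L (Fintype.card n)).rank := by
      rw [frobeniusTwistedPow_neg, rank_smul_of_mem_nonZeroDivisors _ hsign, hM,
        frobeniusTwistedPow_map, rank_map_algebraMap]

/-- **Hasse–Witt.**  Let `𝔽` be the (finite) residue field of a
finite extension of `ℚ_p`, `Ω` an algebraic closure of `𝔽`, and
`L ∈ M_g(𝔽)`.  Let `ρ` be the rank of `L·L^{(p)}⋯L^{(p^{g−1})}`, where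
`L^{(p^i)}` raises every entry of `L` to the `p^i`-th power.  Then the number
of `u ∈ Ω^g` with `u + L·u^{(p)} = 0` is exactly `p^ρ`. -/
theorem hasse_witt_count
    (p : ℕ) [Fact p.Prime] (g : ℕ)
    (𝔽 : Type*) [Field 𝔽] [Fintype 𝔽] [CharP 𝔽 p]
    (Ω : Type*) [Field Ω] [Algebra 𝔽 Ω] [IsAlgClosure 𝔽 Ω]
    (L : Matrix (Fin g) (Fin g) 𝔽) :
    Nat.card {u : Fin g → Ω //
        (∀ i, u i + (L.map (algebraMap 𝔽 Ω)).mulVec (fun j => u j ^ p) i = 0)} =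
      p ^ Matrix.rank (((List.range g).map fun k => L.map fun x => x ^ p ^ k).prod) := by
  have : IsAlgClosed Ω := IsAlgClosure.isAlgClosed 𝔽
  simpa only [Fintype.card_fin, frobeniusTwistedPow] using hasse_witt_count_general p Ω L
end

section
/- Let K be a finite extension of ℚ_p and l(X) = ∑_{k=0}^∞ (e_k/p^k) X^{p^k} ∈ K[[X]] with e_k ∈ O_K^* for all k ≥ 0. For n ≥ 1, let T_n := {π ∈ K : |π| ≤ |p|^{1/(p^n − p^{n−1})}, l(π) = 0} (roots in a fixed algebraic closure, intersected with the disk). Then, over a sufficiently large finite extension of K: |T_n| = p^n; every nonzero π ∈ T_n satisfies |π| = |p|^{1/(p^s − p^{s−1})} for some 1 ≤ s ≤ n; and for each such s, the number of π ∈ T_n with |π| = |p|^{1/(p^s−p^{s−1})} is exactly p^s − p^{s−1}. -/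
open scoped Classical

/-!
Weierstrass preparation: let `f` be a power series over a complete, algebraically closed
ultrametric field whose weights `‖aₖ‖ Rᵏ` tend to zero and are maximal for the last time at
`k = s`. Then `f` has exactly `s` zeros, with multiplicity, in the closed disk of radius `R`. A zero
is the limit of zeros of the truncations: a truncation of large degree has `s` zeros in the disk and
is small at any zero of the previous one, so one of its zeros lies nearby. Dividing by `X - α` at a
zero `α` lowers `s` by one.

For `∑ eₖ / ϖᵏ X ^ qᵏ` the dominant weight stays at index `qˢ` while `R` runs between two
consecutive critical radii, so all zeros have critical absolute values. The derivative is dominated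
by its constant term on the open unit disk, so all zeros are simple.
-/

open Filter Topology

section Ultrametric

variable {E : Type*} [NormedAddCommGroup E] [IsUltrametricDist E]

theorem norm_sum_eq_of_forall_norm_lt {ι : Type*} {f : ι → E} {t : Finset ι} {i : ι} (hi : i ∈ t)
    (h : ∀ j ∈ t, j ≠ i → ‖f j‖ < ‖f i‖) : ‖∑ j ∈ t, f j‖ = ‖f i‖ := by
  rw [← Finset.sum_erase_add t f hi]
  rcases (t.erase i).eq_empty_or_nonempty with hempty | hne
  · rw [hempty, Finset.sum_empty, zero_add]
  · obtain ⟨j, hj, hle⟩ := IsUltrametricDist.exists_norm_finsetSum_le_of_nonempty hne f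
    have hlt := hle.trans_lt (h j (Finset.mem_of_mem_erase hj) (Finset.ne_of_mem_erase hj))
    rw [IsUltrametricDist.norm_add_eq_max_of_norm_ne_norm hlt.ne, max_eq_right hlt.le]

theorem norm_tsum_eq_of_forall_norm_lt {ι : Type*} {f : ι → E} (hf : Summable f) (i : ι)
    (h : ∀ j ≠ i, ‖f j‖ < ‖f i‖) : ‖∑' j, f j‖ = ‖f i‖ := by
  refine tendsto_nhds_unique hf.hasSum.norm (tendsto_const_nhds.congr' ?_)
  filter_upwards [eventually_ge_atTop {i}] with t ht
  exact (norm_sum_eq_of_forall_norm_lt (Finset.singleton_subset_iff.1 ht) fun j _ => h j).symm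

end Ultrametric

section RestrictedSeries

open PowerSeries

variable {K : Type*} [NormedField K] {R : ℝ} {f : K⟦X⟧} {x α : K}

/-- The value `∑ aₖ xᵏ` of a power series at a point; it is `0` by convention where the series
does not converge. -/
noncomputable def evalSum (f : K⟦X⟧) (x : K) : K := ∑' k : ℕ, coeff k f * x ^ k

theorem norm_coeff_mul_pow_le (hx : ‖x‖ ≤ R) (k : ℕ) :
    ‖coeff k f * x ^ k‖ ≤ ‖coeff k f‖ * R ^ k := by
  rw [norm_mul, norm_pow]
  gcongr

theorem tendsto_coeff_mul_pow (hf : IsRestricted R f) (hx : ‖x‖ ≤ R) :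
    Tendsto (fun k => coeff k f * x ^ k) atTop (𝓝 0) :=
  squeeze_zero_norm (norm_coeff_mul_pow_le hx) ((isRestricted_iff' R f).1 hf)

theorem isRestricted_of_norm_coeff_le_pow (m : ℕ) (hR0 : 0 ≤ R) (hR1 : R < 1)
    (h : ∀ k, ‖coeff k f‖ ≤ (k : ℝ) ^ m) : IsRestricted R f :=
  (isRestricted_iff' R f).2 <| squeeze_zero (fun k => by positivity)
    (fun k => mul_le_mul_of_nonneg_right (h k) (by positivity))
    (tendsto_pow_const_mul_const_pow_of_abs_lt_one m (by rwa [abs_of_nonneg hR0]))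

theorem isRestricted_coe (p : Polynomial K) : IsRestricted R (p : K⟦X⟧) := by
  refine (isRestricted_iff' R _).2 (tendsto_const_nhds.congr' ?_)
  filter_upwards [eventually_gt_atTop p.natDegree] with k hk
  rw [Polynomial.coeff_coe, Polynomial.coeff_eq_zero_of_natDegree_lt hk, norm_zero, zero_mul]

theorem isRestricted_X_sub_C (R : ℝ) (α : K) : IsRestricted R (X - C α) := by
  have h : ((Polynomial.X - Polynomial.C α : Polynomial K) : K⟦X⟧) = X - C α := by
    rw [Polynomial.coe_sub, Polynomial.coe_X, Polynomial.coe_C]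
  exact h ▸ isRestricted_coe (Polynomial.X - Polynomial.C α)

theorem evalSum_coe (p : Polynomial K) (x : K) : evalSum (p : K⟦X⟧) x = p.eval x := by
  rw [Polynomial.eval_eq_sum_range, evalSum]
  simp only [Polynomial.coeff_coe]
  refine tsum_eq_sum fun k hk => ?_
  rw [Polynomial.coeff_eq_zero_of_natDegree_lt (by simpa using hk), zero_mul]

theorem coeff_zero_X_sub_C_mul (α : K) (f : K⟦X⟧) :
    coeff 0 ((X - C α) * f) = -(α * coeff 0 f) := by
  rw [sub_mul, map_sub, coeff_zero_X_mul, coeff_C_mul, zero_sub]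

theorem coeff_succ_X_sub_C_mul (α : K) (f : K⟦X⟧) (k : ℕ) :
    coeff (k + 1) ((X - C α) * f) = coeff k f - α * coeff (k + 1) f := by
  rw [sub_mul, map_sub, coeff_succ_X_mul, coeff_C_mul]

variable [IsUltrametricDist K]

theorem isRestricted_derivative (hR : 0 < R) (hf : IsRestricted R f) :
    IsRestricted R (derivative K f) := by
  have hshift := ((tendsto_add_atTop_iff_nat 1).2 ((isRestricted_iff' R f).1 hf)).div_const R
  rw [zero_div] at hshift
  refine (isRestricted_iff' R _).2 (squeeze_zero (fun k => by positivity) (fun k => ?_) hshift)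
  rw [coeff_derivative, norm_mul, pow_succ, ← mul_assoc, mul_div_cancel_right₀ _ hR.ne']
  gcongr
  exact mul_le_of_le_one_right (norm_nonneg _)
    (by exact_mod_cast IsUltrametricDist.norm_natCast_le_one K (k + 1))

/-- The quotient of a power series by `X - α`, meaningful when `α` is a zero of it. -/
noncomputable def divXSubC (f : K⟦X⟧) (α : K) : K⟦X⟧ :=
  mk fun k => ∑' j, coeff (j + k + 1) f * α ^ j

theorem isRestricted_divXSubC (hR : 0 < R) (hf : IsRestricted R f) (hα : ‖α‖ ≤ R) :
    IsRestricted R (divXSubC f α) := by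
  rw [isRestricted_iff', Metric.tendsto_atTop]
  intro ε hε
  have htail := ((isRestricted_iff' R f).1 hf).eventually_lt_const (by positivity : 0 < ε / 2 * R)
  obtain ⟨N, hN⟩ := eventually_atTop.1 htail
  refine ⟨N, fun k hk => ?_⟩
  rw [dist_zero_right, Real.norm_of_nonneg (by positivity), divXSubC, coeff_mk]
  refine lt_of_le_of_lt ?_ (half_lt_self hε)
  rw [← le_div_iff₀ (by positivity)]
  refine IsUltrametricDist.norm_tsum_le_of_forall_le_of_nonneg (by positivity) fun j => ?_
  rw [le_div_iff₀ (by positivity), ← mul_le_mul_iff_left₀ hR]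
  calc ‖coeff (j + k + 1) f * α ^ j‖ * R ^ k * R
      ≤ ‖coeff (j + k + 1) f‖ * R ^ j * R ^ k * R := by
        rw [norm_mul, norm_pow]
        gcongr
    _ = ‖coeff (j + k + 1) f‖ * R ^ (j + k + 1) := by ring
    _ ≤ ε / 2 * R := (hN _ (by omega)).le

variable [CompleteSpace K]

theorem summable_coeff_mul_pow (hf : IsRestricted R f) (hx : ‖x‖ ≤ R) :
    Summable fun k => coeff k f * x ^ k :=
  NonarchimedeanAddGroup.summable_of_tendsto_cofinite_zero
    (Nat.cofinite_eq_atTop ▸ tendsto_coeff_mul_pow hf hx)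

theorem evalSum_X_sub_C_mul (hf : IsRestricted R f) (hx : ‖x‖ ≤ R) :
    evalSum ((X - C α) * f) x = (x - α) * evalSum f x := by
  have hs := summable_coeff_mul_pow hf hx
  have hs' := summable_coeff_mul_pow (isRestricted.mul R (isRestricted_X_sub_C R α) hf) hx
  have hshift := (summable_nat_add_iff 1).2 hs
  have hsplit : evalSum f x = coeff 0 f + ∑' k, coeff (k + 1) f * x ^ (k + 1) := by
    rw [evalSum, hs.tsum_eq_zero_add, pow_zero, mul_one]
  calc evalSum ((X - C α) * f) x
      = -(α * coeff 0 f) +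
          ∑' k, (x * (coeff k f * x ^ k) - α * (coeff (k + 1) f * x ^ (k + 1))) := by
        rw [evalSum, hs'.tsum_eq_zero_add, coeff_zero_X_sub_C_mul, pow_zero, mul_one]
        congr 1
        exact tsum_congr fun k => by rw [coeff_succ_X_sub_C_mul]; ring
    _ = x * evalSum f x - α * (coeff 0 f + ∑' k, coeff (k + 1) f * x ^ (k + 1)) := by
        rw [(hs.mul_left x).tsum_sub (hshift.mul_left α), tsum_mul_left, tsum_mul_left, evalSum]
        ring
    _ = (x - α) * evalSum f x := by rw [← hsplit, sub_mul]

theorem evalSum_derivative_X_sub_C_mul (hR : 0 < R) (hf : IsRestricted R f) (hα : ‖α‖ ≤ R) :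
    evalSum (derivative K ((X - C α) * f)) α = evalSum f α := by
  have hd := isRestricted_derivative hR hf
  have hsum := summable_coeff_mul_pow (isRestricted.mul R (isRestricted_X_sub_C R α) hd) hα
  have hleibniz : derivative K ((X - C α) * f) = (X - C α) * derivative K f + f := by
    simp [Derivation.leibniz, mul_comm, add_comm]
  have hadd : evalSum ((X - C α) * derivative K f + f) α =
      evalSum ((X - C α) * derivative K f) α + evalSum f α := by
    simp only [evalSum, map_add, add_mul, hsum.tsum_add (summable_coeff_mul_pow hf hα)]
  rw [hleibniz, hadd, evalSum_X_sub_C_mul hd hα, sub_self, zero_mul, zero_add]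

theorem norm_sum_coeff_mul_pow_sub_evalSum_le (hf : IsRestricted R f) {C : ℝ} {N : ℕ} (hC : 0 ≤ C)
    (h : ∀ k ≥ N, ‖coeff k f‖ * R ^ k ≤ C) (hx : ‖x‖ ≤ R) :
    ‖∑ k ∈ Finset.range N, coeff k f * x ^ k - evalSum f x‖ ≤ C := by
  rw [evalSum, ← (summable_coeff_mul_pow hf hx).sum_add_tsum_nat_add N, sub_add_cancel_left,
    norm_neg]
  exact IsUltrametricDist.norm_tsum_le_of_forall_le_of_nonneg hC fun k =>
    (norm_coeff_mul_pow_le hx _).trans (h _ (Nat.le_add_left N k))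

theorem tendstoUniformlyOn_evalSum (hf : IsRestricted R f) :
    TendstoUniformlyOn (fun N x => ∑ k ∈ Finset.range N, coeff k f * x ^ k) (evalSum f) atTop
      (Metric.closedBall 0 R) := by
  refine Metric.tendstoUniformlyOn_iff.2 fun ε hε => ?_
  have htail := ((isRestricted_iff' R f).1 hf).eventually_lt_const (half_pos hε)
  obtain ⟨N, hN⟩ := eventually_atTop.1 htail
  filter_upwards [eventually_ge_atTop N] with n hn x hx
  rw [dist_comm, dist_eq_norm]
  exact (norm_sum_coeff_mul_pow_sub_evalSum_le hf (half_pos hε).le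
    (fun k hk => (hN k (hn.trans hk)).le) (mem_closedBall_zero_iff.1 hx)).trans_lt (half_lt_self hε)

theorem tendsto_sum_coeff_mul_pow (hf : IsRestricted R f) {N : ℕ → ℕ} {u : ℕ → K}
    (hN : Tendsto N atTop atTop) (hu : ∀ n, ‖u n‖ ≤ R) (hx : Tendsto u atTop (𝓝 x)) :
    Tendsto (fun n => ∑ k ∈ Finset.range (N n), coeff k f * u n ^ k) atTop
      (𝓝 (evalSum f x)) := by
  have hu' : ∀ n, u n ∈ Metric.closedBall (0 : K) R := fun n => mem_closedBall_zero_iff.2 (hu n)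
  have hxR : x ∈ Metric.closedBall (0 : K) R :=
    Metric.isClosed_closedBall.mem_of_tendsto hx (Eventually.of_forall hu')
  have hcont : ContinuousOn (evalSum f) (Metric.closedBall 0 R) :=
    (tendstoUniformlyOn_evalSum hf).continuousOn (Frequently.of_forall fun N => by fun_prop)
  have hunif : TendstoUniformlyOn (fun n x => ∑ k ∈ Finset.range (N n), coeff k f * x ^ k)
      (evalSum f) atTop (Metric.closedBall 0 R) :=
    fun v hv => hN.eventually (tendstoUniformlyOn_evalSum hf v hv)
  exact hunif.tendsto_comp (hcont x hxR)
    (tendsto_nhdsWithin_iff.2 ⟨hx, Eventually.of_forall hu'⟩)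

theorem summable_coeff_add_mul_pow (hR : 0 < R) (hf : IsRestricted R f) (hα : ‖α‖ ≤ R) (k : ℕ) :
    Summable fun j => coeff (j + k) f * α ^ j := by
  refine NonarchimedeanAddGroup.summable_of_tendsto_cofinite_zero ?_
  have h := ((tendsto_add_atTop_iff_nat k).2 ((isRestricted_iff' R f).1 hf)).div_const (R ^ k)
  rw [zero_div] at h
  rw [Nat.cofinite_eq_atTop]
  refine squeeze_zero_norm (fun j => ?_) h
  rw [pow_add, ← mul_assoc, mul_div_cancel_right₀ _ (pow_ne_zero k hR.ne'), norm_mul, norm_pow]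
  gcongr

theorem X_sub_C_mul_divXSubC (hR : 0 < R) (hf : IsRestricted R f) (hα : ‖α‖ ≤ R)
    (h : evalSum f α = 0) : (X - C α) * divXSubC f α = f := by
  have hstep (k : ℕ) : ∑' j, coeff (j + k) f * α ^ j =
      coeff k f + α * coeff k (divXSubC f α) := by
    rw [(summable_coeff_add_mul_pow hR hf hα k).tsum_eq_zero_add, divXSubC, coeff_mk,
      ← tsum_mul_left, zero_add, pow_zero, mul_one]
    congr 1
    refine tsum_congr fun j => ?_
    rw [pow_succ', mul_left_comm, add_right_comm]
  ext k
  cases k with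
  | zero =>
    rw [coeff_zero_X_sub_C_mul, neg_eq_iff_eq_neg, eq_neg_iff_add_eq_zero, add_comm, ← hstep]
    exact h
  | succ k => rw [coeff_succ_X_sub_C_mul, sub_eq_iff_eq_add, ← hstep]; simp [divXSubC, add_assoc]

end RestrictedSeries

section Distinguished

open PowerSeries

variable {K : Type*} [NormedField K] {R : ℝ} {s t : ℕ} {f g : K⟦X⟧}

/-- A power series is distinguished of degree `s` on the closed disk of radius `R` if the weights
`‖aₖ‖ Rᵏ` of its coefficients tend to zero, attain their maximum at `k = s`, and do not attain it
at any later index. In the language of Newton polygons, `s` is the right end of the segment of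
slope `log R` (with respect to the valuation `-log ‖·‖`). -/
structure IsDistinguished (R : ℝ) (s : ℕ) (f : K⟦X⟧) : Prop where
  restricted : IsRestricted R f
  le : ∀ k, ‖coeff k f‖ * R ^ k ≤ ‖coeff s f‖ * R ^ s
  lt : ∀ k > s, ‖coeff k f‖ * R ^ k < ‖coeff s f‖ * R ^ s

theorem exists_isDistinguished (hR : 0 < R) (hf : IsRestricted R f) (h0 : f ≠ 0) :
    ∃ s, IsDistinguished R s f := by
  obtain ⟨m, hm⟩ := exists_coeff_ne_zero_iff_ne_zero.2 h0
  have hpos : 0 < ‖coeff m f‖ * R ^ m := by positivity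
  have htail := ((isRestricted_iff' R f).1 hf).eventually_lt_const hpos
  have hfin : {k | ‖coeff m f‖ * R ^ m ≤ ‖coeff k f‖ * R ^ k}.Finite := by
    rw [← Nat.cofinite_eq_atTop, eventually_cofinite] at htail
    simpa only [not_lt] using htail
  obtain ⟨s, hs, hmax⟩ := Set.exists_max_image _ (fun k => toLex (‖coeff k f‖ * R ^ k, k)) hfin
    ⟨m, le_refl (‖coeff m f‖ * R ^ m)⟩
  have hlex (k : ℕ) : ‖coeff k f‖ * R ^ k < ‖coeff s f‖ * R ^ s ∨
      ‖coeff k f‖ * R ^ k = ‖coeff s f‖ * R ^ s ∧ k ≤ s := by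
    by_cases hk : ‖coeff m f‖ * R ^ m ≤ ‖coeff k f‖ * R ^ k
    · exact Prod.Lex.toLex_le_toLex.1 (hmax k hk)
    · exact Or.inl ((not_le.1 hk).trans_le hs)
  exact ⟨s, hf, fun k => (hlex k).elim le_of_lt fun h => h.1.le,
    fun k hk => (hlex k).resolve_right fun h => hk.not_ge h.2⟩

theorem isDistinguished_C (R : ℝ) {c : K} (hc : c ≠ 0) : IsDistinguished R 0 (C c) where
  restricted := isRestricted_C R c
  le k := by rcases k with - | k <;> simp [coeff_C]
  lt k hk := by simpa [coeff_C, hk.ne'] using hc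

theorem isDistinguished_X_sub_C_of_norm_le {α : K} (hR : 0 < R) (hα : ‖α‖ ≤ R) :
    IsDistinguished R 1 (X - C α) where
  restricted := isRestricted_X_sub_C R α
  le k := by
    rcases k with - | - | k
    · simpa [coeff_X] using hα
    · exact le_rfl
    · simpa [coeff_X, coeff_C] using hR.le
  lt k hk := by simpa [coeff_X, coeff_C, hk.ne', (zero_lt_one.trans hk).ne'] using hR

theorem isDistinguished_X_sub_C_of_lt_norm {α : K} (hR : 0 ≤ R) (hα : R < ‖α‖) :
    IsDistinguished R 0 (X - C α) where
  restricted := isRestricted_X_sub_C R α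
  le k := by
    rcases k with - | - | k
    · exact le_rfl
    · simpa [coeff_X, coeff_C] using hα.le
    · simp [coeff_X]
  lt k hk := by
    rcases k with - | - | k
    · exact absurd hk (lt_irrefl 0)
    · simpa [coeff_X] using hα
    · simpa [coeff_X, coeff_C] using hR.trans_lt hα

namespace IsDistinguished

theorem unique (hs : IsDistinguished R s f) (ht : IsDistinguished R t f) : s = t :=
  le_antisymm (not_lt.1 fun h => (hs.le t).not_gt (by simpa using ht.lt s h))
    (not_lt.1 fun h => (ht.le s).not_gt (hs.lt t h))

theorem mul_pow_pos (hR : 0 ≤ R) (hf : IsDistinguished R s f) : 0 < ‖coeff s f‖ * R ^ s :=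
  lt_of_le_of_lt (by positivity) (hf.lt (s + 1) s.lt_succ_self)

theorem norm_coeff_pos (hR : 0 ≤ R) (hf : IsDistinguished R s f) : 0 < ‖coeff s f‖ :=
  pos_of_mul_pos_left (hf.mul_pow_pos hR) (by positivity)

theorem mul_weight_le (hR : 0 ≤ R) (hf : IsDistinguished R s f) (hg : IsDistinguished R t g)
    (i j : ℕ) : ‖coeff i f‖ * R ^ i * (‖coeff j g‖ * R ^ j) ≤
      ‖coeff s f‖ * R ^ s * (‖coeff t g‖ * R ^ t) :=
  mul_le_mul (hf.le i) (hg.le j) (by positivity) (by positivity)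

theorem mul_weight_lt (hR : 0 ≤ R) (hf : IsDistinguished R s f) (hg : IsDistinguished R t g)
    {i j : ℕ} (h : s < i ∨ t < j) : ‖coeff i f‖ * R ^ i * (‖coeff j g‖ * R ^ j) <
      ‖coeff s f‖ * R ^ s * (‖coeff t g‖ * R ^ t) := by
  rcases h with h | h
  · exact (mul_le_mul_of_nonneg_left (hg.le j) (by positivity)).trans_lt
      (mul_lt_mul_of_pos_right (hf.lt i h) (hg.mul_pow_pos hR))
  · exact (mul_le_mul_of_nonneg_right (hf.le i) (by positivity)).trans_lt
      (mul_lt_mul_of_pos_left (hg.lt j h) (hf.mul_pow_pos hR))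

variable [IsUltrametricDist K]

theorem norm_coeff_mul (hR : 0 < R) (hf : IsDistinguished R s f) (hg : IsDistinguished R t g) :
    ‖coeff (s + t) (f * g)‖ = ‖coeff s f‖ * ‖coeff t g‖ := by
  rw [coeff_mul, ← norm_mul]
  refine norm_sum_eq_of_forall_norm_lt (i := (s, t)) (by simp) fun ⟨i, j⟩ hij hne => ?_
  have hsum : i + j = s + t := Finset.HasAntidiagonal.mem_antidiagonal.1 hij
  have hlarge : s < i ∨ t < j := by
    by_contra! hle
    exact hne (Prod.ext (by omega) (by omega))
  refine lt_of_mul_lt_mul_right ?_ (pow_nonneg hR.le (s + t))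
  calc ‖coeff i f * coeff j g‖ * R ^ (s + t)
      = ‖coeff i f‖ * R ^ i * (‖coeff j g‖ * R ^ j) := by rw [norm_mul, ← hsum]; ring
    _ < ‖coeff s f‖ * R ^ s * (‖coeff t g‖ * R ^ t) := mul_weight_lt hR.le hf hg hlarge
    _ = ‖coeff s f * coeff t g‖ * R ^ (s + t) := by rw [norm_mul]; ring

theorem mul (hR : 0 < R) (hf : IsDistinguished R s f) (hg : IsDistinguished R t g) :
    IsDistinguished R (s + t) (f * g) := by
  have hmax : ‖coeff (s + t) (f * g)‖ * R ^ (s + t) =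
      ‖coeff s f‖ * R ^ s * (‖coeff t g‖ * R ^ t) := by
    rw [norm_coeff_mul hR hf hg]; ring
  have hbound (k : ℕ) : ∃ i j, i + j = k ∧ ‖coeff k (f * g)‖ * R ^ k ≤
      ‖coeff i f‖ * R ^ i * (‖coeff j g‖ * R ^ j) := by
    obtain ⟨⟨i, j⟩, hij, hle⟩ := IsUltrametricDist.exists_norm_finsetSum_le_of_nonempty
      (⟨(0, k), by simp⟩ : (Finset.HasAntidiagonal.antidiagonal k).Nonempty)
      fun ij : ℕ × ℕ => coeff ij.1 f * coeff ij.2 g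
    refine ⟨i, j, Finset.HasAntidiagonal.mem_antidiagonal.1 hij, ?_⟩
    calc ‖coeff k (f * g)‖ * R ^ k ≤ ‖coeff i f * coeff j g‖ * R ^ k := by
          rw [coeff_mul]; gcongr
      _ = ‖coeff i f‖ * R ^ i * (‖coeff j g‖ * R ^ j) := by
          rw [norm_mul, ← Finset.HasAntidiagonal.mem_antidiagonal.1 hij]; ring
  refine ⟨isRestricted.mul R hf.restricted hg.restricted, fun k => ?_, fun k hk => ?_⟩
  · obtain ⟨i, j, -, hle⟩ := hbound k
    exact hmax ▸ hle.trans (mul_weight_le hR.le hf hg i j)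
  · obtain ⟨i, j, hij, hle⟩ := hbound k
    exact hmax ▸ hle.trans_lt (mul_weight_lt hR.le hf hg (by omega))

theorem norm_evalSum [CompleteSpace K] {x : K} (hf : IsDistinguished R 0 f) (hx : ‖x‖ ≤ R) :
    ‖evalSum f x‖ = ‖coeff 0 f‖ := by
  have hlt (k : ℕ) (hk : k ≠ 0) : ‖coeff k f * x ^ k‖ < ‖coeff 0 f * x ^ 0‖ := by
    simpa using (norm_coeff_mul_pow_le hx k).trans_lt (hf.lt k (Nat.pos_of_ne_zero hk))
  have hs : Summable fun k => coeff k f * x ^ k := summable_coeff_mul_pow hf.restricted hx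
  rw [evalSum, norm_tsum_eq_of_forall_norm_lt hs 0 hlt, pow_zero, mul_one]

end IsDistinguished

end Distinguished

section DiskFactorization

open PowerSeries

variable {K : Type*} [NormedField K] {R : ℝ} {s : ℕ} {f u : K⟦X⟧} {x α : K} {M : Multiset K}

/-- A factorization of a power series, on the closed disk of radius `R`, into the linear factors of
its zeros `M` in the disk and a series `u` whose constant coefficient dominates: the conclusion of
the Weierstrass preparation theorem. -/
structure IsDiskFactorization (R : ℝ) (f : K⟦X⟧) (M : Multiset K) (u : K⟦X⟧) : Prop where
  norm_le : ∀ α ∈ M, ‖α‖ ≤ R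
  unit : IsDistinguished R 0 u
  eq_prod_mul : f = (M.map fun α => X - C α).prod * u

theorem isRestricted_prod_X_sub_C [IsUltrametricDist K] (R : ℝ) (M : Multiset K) :
    IsRestricted R (M.map fun α => X - C α).prod :=
  Multiset.prod_induction _ _ (fun _ _ => isRestricted.mul R) (isRestricted_one R) <| by
    simpa using fun α _ => isRestricted_X_sub_C R α

theorem pow_card_le_norm_prod_sub {c : ℝ} (hc : 0 ≤ c) (h : ∀ α ∈ M, c ≤ ‖x - α‖) :
    c ^ M.card ≤ ‖(M.map (x - ·)).prod‖ := by
  induction M using Multiset.induction with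
  | empty => simp
  | cons α M ih =>
    rw [Multiset.card_cons, pow_succ', Multiset.map_cons, Multiset.prod_cons, norm_mul]
    exact mul_le_mul (h α (Multiset.mem_cons_self α M))
      (ih fun β hβ => h β (Multiset.mem_cons_of_mem hβ)) (by positivity) (norm_nonneg _)

namespace IsDiskFactorization

theorem cons (h : IsDiskFactorization R f M u) (hα : ‖α‖ ≤ R) :
    IsDiskFactorization R ((X - C α) * f) (α ::ₘ M) u where
  norm_le := Multiset.forall_mem_cons.2 ⟨hα, h.norm_le⟩
  unit := h.unit
  eq_prod_mul := by rw [Multiset.map_cons, Multiset.prod_cons, mul_assoc, ← h.eq_prod_mul]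

theorem of_cons (h : IsDiskFactorization R f (α ::ₘ M) u) :
    IsDiskFactorization R ((M.map fun α => X - C α).prod * u) M u where
  norm_le β hβ := h.norm_le β (Multiset.mem_cons_of_mem hβ)
  unit := h.unit
  eq_prod_mul := rfl

variable [IsUltrametricDist K]

theorem isDistinguished_and_norm_coeff (hR : 0 < R) (h : IsDiskFactorization R f M u) :
    IsDistinguished R M.card f ∧ ‖coeff M.card f‖ = ‖coeff 0 u‖ := by
  induction M using Multiset.induction generalizing f with
  | empty => simpa [h.eq_prod_mul] using h.unit
  | cons α M ih =>
    obtain ⟨hdist, hnorm⟩ := ih h.of_cons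
    have hα := isDistinguished_X_sub_C_of_norm_le hR (h.norm_le α (Multiset.mem_cons_self α M))
    have hf : f = (X - C α) * ((M.map fun α => X - C α).prod * u) := by
      rw [h.eq_prod_mul, Multiset.map_cons, Multiset.prod_cons, mul_assoc]
    rw [hf, Multiset.card_cons, add_comm]
    exact ⟨hα.mul hR hdist, by rw [hα.norm_coeff_mul hR hdist, hnorm]; simp [coeff_X]⟩

variable [CompleteSpace K]

theorem evalSum_eq (h : IsDiskFactorization R f M u) (hx : ‖x‖ ≤ R) :
    evalSum f x = (M.map (x - ·)).prod * evalSum u x := by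
  induction M using Multiset.induction generalizing f with
  | empty => simp [h.eq_prod_mul]
  | cons α M ih =>
    rw [h.eq_prod_mul, Multiset.map_cons, Multiset.prod_cons, mul_assoc, evalSum_X_sub_C_mul
      (isRestricted.mul R (isRestricted_prod_X_sub_C R M) h.unit.restricted) hx, ih h.of_cons,
      Multiset.map_cons, Multiset.prod_cons, mul_assoc]

theorem norm_evalSum (h : IsDiskFactorization R f M u) (hx : ‖x‖ ≤ R) :
    ‖evalSum f x‖ = ‖(M.map (x - ·)).prod‖ * ‖coeff 0 u‖ := by
  rw [h.evalSum_eq hx, norm_mul, h.unit.norm_evalSum hx]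

theorem evalSum_eq_zero_iff (hR : 0 ≤ R) (h : IsDiskFactorization R f M u) (hx : ‖x‖ ≤ R) :
    evalSum f x = 0 ↔ x ∈ M := by
  have hu : ‖coeff 0 u‖ ≠ 0 := (h.unit.norm_coeff_pos hR).ne'
  rw [← norm_eq_zero, h.norm_evalSum hx, mul_eq_zero_iff_right hu, norm_eq_zero,
    Multiset.prod_eq_zero_iff, Multiset.mem_map]
  simp [sub_eq_zero]

theorem exists_norm_sub_pow_card_le (hR : 0 < R) (h : IsDiskFactorization R f M u) (hM : M ≠ 0)
    (hx : ‖x‖ ≤ R) : ∃ α ∈ M, ‖x - α‖ ^ M.card * ‖coeff M.card f‖ ≤ ‖evalSum f x‖ := by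
  obtain ⟨α, hα, hmin⟩ := M.toFinset.exists_min_image (fun α => ‖x - α‖)
    (Multiset.toFinset_nonempty.2 hM)
  refine ⟨α, Multiset.mem_toFinset.1 hα, ?_⟩
  rw [(h.isDistinguished_and_norm_coeff hR).2, h.norm_evalSum hx]
  gcongr
  exact pow_card_le_norm_prod_sub (norm_nonneg _) fun β hβ => hmin β (Multiset.mem_toFinset.2 hβ)

theorem nodup (hR : 0 < R) (h : IsDiskFactorization R f M u)
    (hd : ∀ x ∈ M, evalSum (derivative K f) x ≠ 0) : M.Nodup := by
  refine Multiset.nodup_iff_ne_cons_cons.2 fun α N hN => hd α (by simp [hN]) ?_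
  have hα : ‖α‖ ≤ R := h.norm_le α (by simp [hN])
  have hrest := isRestricted.mul R (isRestricted_prod_X_sub_C R N) h.unit.restricted
  rw [h.eq_prod_mul, hN, Multiset.map_cons, Multiset.map_cons, Multiset.prod_cons,
    Multiset.prod_cons, mul_assoc, mul_assoc, evalSum_derivative_X_sub_C_mul hR
      (isRestricted.mul R (isRestricted_X_sub_C R α) hrest) hα, evalSum_X_sub_C_mul hrest hα,
    sub_self, zero_mul]

theorem ncard_zeros (hR : 0 < R) (h : IsDiskFactorization R f M u)
    (hd : ∀ x ∈ M, evalSum (derivative K f) x ≠ 0) :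
    {x | ‖x‖ ≤ R ∧ evalSum f x = 0}.ncard = M.card := by
  have hzeros : {x | ‖x‖ ≤ R ∧ evalSum f x = 0} = (M.toFinset : Set K) := by
    ext x
    rw [Finset.mem_coe, Multiset.mem_toFinset]
    exact ⟨fun hx => (h.evalSum_eq_zero_iff hR.le hx.1).1 hx.2,
      fun hx => ⟨h.norm_le x hx, (h.evalSum_eq_zero_iff hR.le (h.norm_le x hx)).2 hx⟩⟩
  rw [hzeros, Set.ncard_coe_finset, Multiset.toFinset_card_of_nodup (h.nodup hR hd)]

end IsDiskFactorization

end DiskFactorization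

section WeierstrassPreparation

open PowerSeries

variable {K : Type*} [NormedField K] {R : ℝ} {s : ℕ} {f : K⟦X⟧} {x : K}

theorem coe_prod_X_sub_C (M : Multiset K) :
    (((M.map fun α => Polynomial.X - Polynomial.C α).prod : Polynomial K) : K⟦X⟧) =
      (M.map fun α => X - C α).prod := by
  induction M using Multiset.induction with
  | empty => simp
  | cons α M ih => simp only [Multiset.map_cons, Multiset.prod_cons, Polynomial.coe_mul, ih,
      Polynomial.coe_sub, Polynomial.coe_X, Polynomial.coe_C]

theorem eval_trunc (n : ℕ) (f : K⟦X⟧) (x : K) :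
    (trunc n f).eval x = ∑ k ∈ Finset.range n, coeff k f * x ^ k :=
  eval₂_trunc_eq_sum_range x (RingHom.id K) n f

theorem IsDistinguished.trunc (hR : 0 ≤ R) (hf : IsDistinguished R s f) {n : ℕ} (hn : s < n) :
    IsDistinguished R s (trunc n f : K⟦X⟧) := by
  have hle (k : ℕ) : ‖coeff k (PowerSeries.trunc n f : K⟦X⟧)‖ ≤ ‖coeff k f‖ := by
    rw [Polynomial.coeff_coe, coeff_trunc]
    split_ifs <;> simp
  have hs : coeff s (PowerSeries.trunc n f : K⟦X⟧) = coeff s f := coeff_coe_trunc_of_lt hn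
  refine ⟨isRestricted_coe _, fun k => ?_, fun k hk => ?_⟩ <;> rw [hs]
  · exact (mul_le_mul_of_nonneg_right (hle k) (by positivity)).trans (hf.le k)
  · exact (mul_le_mul_of_nonneg_right (hle k) (by positivity)).trans_lt (hf.lt k hk)

variable [IsUltrametricDist K]

theorem isDistinguished_prod_X_sub_C_of_lt_norm (hR : 0 < R) {M : Multiset K}
    (hM : ∀ α ∈ M, R < ‖α‖) : IsDistinguished R 0 (M.map fun α => X - C α).prod :=
  Multiset.prod_induction _ _ (fun _ _ hf hg => hf.mul hR hg)
    (by simpa using isDistinguished_C R (one_ne_zero (α := K))) <| by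
    simpa using fun α hα => isDistinguished_X_sub_C_of_lt_norm hR.le (hM α hα)

theorem exists_isDiskFactorization_coe [IsAlgClosed K] (hR : 0 < R) {p : Polynomial K}
    (hp : p ≠ 0) : ∃ M u, IsDiskFactorization R (p : K⟦X⟧) M u := by
  refine ⟨p.roots.filter (‖·‖ ≤ R), C p.leadingCoeff *
    ((p.roots.filter (¬ ‖·‖ ≤ R)).map fun α => X - C α).prod, ⟨?_, ?_, ?_⟩⟩
  · exact fun α hα => (Multiset.mem_filter.1 hα).2
  · exact (isDistinguished_C R (Polynomial.leadingCoeff_ne_zero.2 hp)).mul hR <|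
      isDistinguished_prod_X_sub_C_of_lt_norm hR fun α hα => not_le.1 (Multiset.mem_filter.1 hα).2
  · conv_lhs => rw [(IsAlgClosed.splits p).eq_prod_roots]
    rw [Polynomial.coe_mul, Polynomial.coe_C, coe_prod_X_sub_C, mul_left_comm, ← Multiset.prod_add,
      ← Multiset.map_add, Multiset.filter_add_not]

variable [CompleteSpace K] [IsAlgClosed K]

theorem exists_root_norm_sub_pow_le (hR : 0 < R) (hs : s ≠ 0) {p : Polynomial K}
    (hp : IsDistinguished R s (p : K⟦X⟧)) (hx : ‖x‖ ≤ R) :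
    ∃ α, ‖α‖ ≤ R ∧ p.eval α = 0 ∧ ‖x - α‖ ^ s * ‖coeff s (p : K⟦X⟧)‖ ≤ ‖p.eval x‖ := by
  have hp0 : p ≠ 0 := by
    rintro rfl
    simpa using hp.norm_coeff_pos hR.le
  obtain ⟨M, u, h⟩ := exists_isDiskFactorization_coe hR hp0
  obtain rfl : M.card = s := (h.isDistinguished_and_norm_coeff hR).1.unique hp
  obtain ⟨α, hα, hle⟩ := h.exists_norm_sub_pow_card_le hR (by simpa using hs) hx
  have hαR := h.norm_le α hα
  exact ⟨α, hαR, evalSum_coe p α ▸ (h.evalSum_eq_zero_iff hR.le hαR).2 hα, evalSum_coe p x ▸ hle⟩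

theorem IsDistinguished.exists_seq_root_trunc (hR : 0 < R) (hs : s ≠ 0)
    (hf : IsDistinguished R s f) : ∃ α : ℕ → K, (∀ n, ‖α n‖ ≤ R) ∧
      (∀ n, ∑ k ∈ Finset.range (s + 1 + n), coeff k f * α n ^ k = 0) ∧
      ∀ n, ‖α n - α (n + 1)‖ ^ s * ‖coeff s f‖ ≤
        ‖coeff (s + 1 + n) f‖ * R ^ (s + 1 + n) := by
  have hnear (n : ℕ) (x : K) (hx : ‖x‖ ≤ R) : ∃ α, ‖α‖ ≤ R ∧
      ∑ k ∈ Finset.range (s + 1 + n), coeff k f * α ^ k = 0 ∧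
      ‖x - α‖ ^ s * ‖coeff s f‖ ≤ ‖∑ k ∈ Finset.range (s + 1 + n), coeff k f * x ^ k‖ := by
    have hsn : s < s + 1 + n := by omega
    obtain ⟨α, hα, h0, hle⟩ := exists_root_norm_sub_pow_le hR hs (hf.trunc hR.le hsn) hx
    rw [eval_trunc] at h0 hle
    rw [coeff_coe_trunc_of_lt hsn] at hle
    exact ⟨α, hα, h0, hle⟩
  choose! next hnext_le hnext_eq hnext_near using hnear
  let α : ℕ → K := Nat.rec (next 0 0) fun n β => next (n + 1) β
  have hα (n : ℕ) : ‖α n‖ ≤ R := by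
    induction n with
    | zero => exact hnext_le 0 0 (by simpa using hR.le)
    | succ n ih => exact hnext_le (n + 1) (α n) ih
  have hroot (n : ℕ) : ∑ k ∈ Finset.range (s + 1 + n), coeff k f * α n ^ k = 0 := by
    cases n with
    | zero => exact hnext_eq 0 0 (by simpa using hR.le)
    | succ n => exact hnext_eq (n + 1) (α n) (hα n)
  refine ⟨α, hα, hroot, fun n => (hnext_near (n + 1) (α n) (hα n)).trans ?_⟩
  rw [← add_assoc, Finset.sum_range_succ, hroot n, zero_add]
  exact norm_coeff_mul_pow_le (hα n) _

theorem IsDistinguished.exists_evalSum_eq_zero (hR : 0 < R) (hs : s ≠ 0)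
    (hf : IsDistinguished R s f) : ∃ x, ‖x‖ ≤ R ∧ evalSum f x = 0 := by
  obtain ⟨α, hα, hroot, hstep⟩ := hf.exists_seq_root_trunc hR hs
  have hindex : Tendsto (fun n => s + 1 + n) atTop atTop :=
    tendsto_atTop_mono (fun n => Nat.le_add_left n _) tendsto_id
  have hpow : Tendsto (fun n => ‖α n - α (n + 1)‖ ^ s) atTop (𝓝 0) := by
    have h := (((isRestricted_iff' R f).1 hf.restricted).comp hindex).div_const ‖coeff s f‖
    rw [zero_div] at h
    exact squeeze_zero (fun n => by positivity)
      (fun n => (le_div_iff₀ (hf.norm_coeff_pos hR.le)).2 (hstep n)) h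
  have hcauchy : CauchySeq α := by
    refine NonarchimedeanAddGroup.cauchySeq_of_tendsto_sub_nhds_zero ?_
    refine NormedAddGroup.tendsto_nhds_zero.2 fun ε hε => ?_
    filter_upwards [hpow.eventually_lt_const (pow_pos hε s)] with n hn
    rw [norm_sub_rev]
    exact lt_of_pow_lt_pow_left₀ s hε.le hn
  obtain ⟨x, hx⟩ := cauchySeq_tendsto_of_complete hcauchy
  refine ⟨x, le_of_tendsto hx.norm (Eventually.of_forall hα), ?_⟩
  have hlim := tendsto_sum_coeff_mul_pow hf.restricted hindex hα hx
  simp only [hroot] at hlim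
  exact tendsto_nhds_unique hlim tendsto_const_nhds

theorem IsDistinguished.exists_isDiskFactorization (hR : 0 < R) (hf : IsDistinguished R s f) :
    ∃ M u, IsDiskFactorization R f M u := by
  induction s generalizing f with
  | zero => exact ⟨0, f, by simp, hf, by simp⟩
  | succ s ih =>
    obtain ⟨α, hα, h0⟩ := hf.exists_evalSum_eq_zero hR s.succ_ne_zero
    have hmul := X_sub_C_mul_divXSubC hR hf.restricted hα h0
    have hne : divXSubC f α ≠ 0 := by
      intro h
      rw [h, mul_zero] at hmul
      simpa [← hmul] using hf.norm_coeff_pos hR.le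
    obtain ⟨t, ht⟩ := exists_isDistinguished hR (isRestricted_divXSubC hR hf.restricted hα) hne
    have hprod := (isDistinguished_X_sub_C_of_norm_le hR hα).mul hR ht
    rw [hmul] at hprod
    obtain rfl : t = s := by have := hprod.unique hf; omega
    obtain ⟨M, u, h⟩ := ih ht
    exact ⟨α ::ₘ M, u, hmul ▸ h.cons hα⟩

theorem IsDistinguished.ncard_zeros (hR : 0 < R) (hf : IsDistinguished R s f)
    (hd : ∀ x, ‖x‖ ≤ R → evalSum (derivative K f) x ≠ 0) :
    {x | ‖x‖ ≤ R ∧ evalSum f x = 0}.ncard = s := by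
  obtain ⟨M, u, h⟩ := hf.exists_isDiskFactorization hR
  rw [h.ncard_zeros hR fun x hx => hd x (h.norm_le x hx)]
  exact (h.isDistinguished_and_norm_coeff hR).1.unique hf

end WeierstrassPreparation

/-- The absolute values of the zeros of `∑ eₖ / ϖᵏ X ^ qᵏ`, where `c = ‖ϖ‖`: radius `0`, followed
by the radii `c ^ (1 / (qˢ - qˢ⁻¹))` at which the terms of index `s - 1` and `s` have the same
size. -/
noncomputable def criticalRadius (c : ℝ) (q : ℕ) : ℕ → ℝ
  | 0 => 0
  | s + 1 => c ^ ((1 : ℝ) / ((q : ℝ) ^ (s + 1) - (q : ℝ) ^ s))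

section CriticalRadius

variable {c r : ℝ} {q s k : ℕ}

theorem criticalRadius_of_one_le (c : ℝ) (q : ℕ) (hs : 1 ≤ s) :
    criticalRadius c q s = c ^ ((1 : ℝ) / ((q : ℝ) ^ s - (q : ℝ) ^ (s - 1))) := by
  obtain ⟨s, rfl⟩ := Nat.exists_eq_add_of_le' hs
  rfl

theorem criticalRadius_nonneg (hc : 0 ≤ c) (q s : ℕ) : 0 ≤ criticalRadius c q s := by
  cases s with
  | zero => exact le_rfl
  | succ s => exact Real.rpow_nonneg hc _

theorem criticalRadius_succ_pos (hc : 0 < c) (q s : ℕ) : 0 < criticalRadius c q (s + 1) :=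
  Real.rpow_pos_of_pos hc _

theorem criticalRadius_succ_pow (hc : 0 ≤ c) (hq : 1 < q) (s : ℕ) :
    criticalRadius c q (s + 1) ^ (q ^ (s + 1) - q ^ s) = c := by
  have hlt : q ^ s < q ^ (s + 1) := Nat.pow_lt_pow_right hq s.lt_succ_self
  have hcast : ((q ^ (s + 1) - q ^ s : ℕ) : ℝ) = (q : ℝ) ^ (s + 1) - (q : ℝ) ^ s := by
    rw [Nat.cast_sub hlt.le, Nat.cast_pow, Nat.cast_pow]
  rw [criticalRadius, ← hcast, one_div]
  exact Real.rpow_inv_natCast_pow hc (Nat.sub_ne_zero_of_lt hlt)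

theorem criticalRadius_lt_one (hc0 : 0 ≤ c) (hc1 : c < 1) (hq : 1 < q) (s : ℕ) :
    criticalRadius c q s < 1 := by
  cases s with
  | zero => exact one_pos
  | succ s =>
    have hq' : (1 : ℝ) < q := by exact_mod_cast hq
    exact Real.rpow_lt_one hc0 hc1
      (one_div_pos.2 (sub_pos.2 (pow_lt_pow_right₀ hq' s.lt_succ_self)))

theorem strictMono_criticalRadius (hc0 : 0 < c) (hc1 : c < 1) (hq : 1 < q) :
    StrictMono (criticalRadius c q) := by
  refine strictMono_nat_of_lt_succ fun s => ?_
  cases s with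
  | zero => exact criticalRadius_succ_pos hc0 q 0
  | succ s =>
    have hq' : (1 : ℝ) < q := by exact_mod_cast hq
    have hpos : (0 : ℝ) < (q : ℝ) ^ (s + 1) - (q : ℝ) ^ s :=
      sub_pos.2 (pow_lt_pow_right₀ hq' s.lt_succ_self)
    refine Real.rpow_lt_rpow_of_exponent_gt hc0 hc1 (one_div_lt_one_div_of_lt hpos ?_)
    calc (q : ℝ) ^ (s + 1) - (q : ℝ) ^ s < q * ((q : ℝ) ^ (s + 1) - (q : ℝ) ^ s) :=
          lt_mul_of_one_lt_left hpos hq'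
      _ = (q : ℝ) ^ (s + 1 + 1) - (q : ℝ) ^ (s + 1) := by ring

theorem pow_pow_succ_div (hq : 1 < q) (c r : ℝ) (k : ℕ) :
    r ^ q ^ (k + 1) / c ^ (k + 1) = r ^ (q ^ (k + 1) - q ^ k) / c * (r ^ q ^ k / c ^ k) := by
  rw [div_mul_div_comm, ← pow_add, ← pow_succ',
    Nat.sub_add_cancel (Nat.pow_le_pow_right (by omega) k.le_succ)]

theorem pow_pow_div_le_of_criticalRadius_le (hc0 : 0 < c) (hc1 : c < 1) (hq : 1 < q)
    (hr : criticalRadius c q s ≤ r) (hks : k ≤ s) :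
    r ^ q ^ k / c ^ k ≤ r ^ q ^ s / c ^ s := by
  have hr0 : 0 ≤ r := (criticalRadius_nonneg hc0.le q s).trans hr
  refine Nat.decreasingInduction' (P := fun k => r ^ q ^ k / c ^ k ≤ r ^ q ^ s / c ^ s)
    (fun j hj _ ih => le_trans ?_ ih) hks le_rfl
  rw [pow_pow_succ_div hq]
  refine le_mul_of_one_le_left (by positivity) ((one_le_div hc0).2 ?_)
  rw [← criticalRadius_succ_pow hc0.le hq j]
  exact pow_le_pow_left₀ (criticalRadius_nonneg hc0.le q _)
    (((strictMono_criticalRadius hc0 hc1 hq).monotone hj).trans hr) _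

theorem pow_pow_div_lt_of_lt_criticalRadius (hc0 : 0 < c) (hc1 : c < 1) (hq : 1 < q) (hr0 : 0 < r)
    (hr : r < criticalRadius c q (s + 1)) (hsk : s < k) :
    r ^ q ^ k / c ^ k < r ^ q ^ s / c ^ s := by
  refine strictAntiOn_of_add_one_lt (f := fun j => r ^ q ^ j / c ^ j) Set.ordConnected_Ici
    (fun j _ (hj : s ≤ j) _ => ?_) Set.self_mem_Ici hsk.le hsk
  rw [pow_pow_succ_div hq]
  refine mul_lt_of_lt_one_left (by positivity) ((div_lt_one hc0).2 ?_)
  rw [← criticalRadius_succ_pow hc0.le hq j]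
  exact pow_lt_pow_left₀ (hr.trans_le ((strictMono_criticalRadius hc0 hc1 hq).monotone (by omega)))
    hr0.le (Nat.sub_ne_zero_of_lt (Nat.pow_lt_pow_right hq j.lt_succ_self))

end CriticalRadius

section LogSeries

open PowerSeries

variable {K : Type*} [NormedField K] {R : ℝ} {q n s : ℕ} {ϖ x : K} {e : ℕ → K}

/-- The power series `∑ eₖ / ϖᵏ X ^ qᵏ`. For `e = 1` and `ϖ` a uniformizer of a local field with
residue field of order `q`, it is the logarithm of a Lubin–Tate formal group. -/
noncomputable def logSeries (ϖ : K) (q : ℕ) (e : ℕ → K) : K⟦X⟧ :=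
  mk (Function.extend (q ^ ·) (fun k => e k / ϖ ^ k) 0)

theorem coeff_pow_logSeries (hq : 1 < q) (ϖ : K) (e : ℕ → K) (k : ℕ) :
    coeff (q ^ k) (logSeries ϖ q e) = e k / ϖ ^ k := by
  rw [logSeries, coeff_mk]
  exact (Nat.pow_right_injective hq).extend_apply _ _ k

theorem coeff_logSeries_eq_zero {j : ℕ} (hj : j ∉ Set.range (q ^ ·)) (ϖ : K) (e : ℕ → K) :
    coeff j (logSeries ϖ q e) = 0 := by
  rw [logSeries, coeff_mk]
  exact Function.extend_apply' _ _ _ hj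

theorem evalSum_logSeries (hq : 1 < q) (ϖ x : K) (e : ℕ → K) :
    evalSum (logSeries ϖ q e) x = ∑' k, e k / ϖ ^ k * x ^ q ^ k := by
  rw [evalSum, ← (Nat.pow_right_injective hq).tsum_eq]
  · exact tsum_congr fun k => by rw [coeff_pow_logSeries hq]
  · exact Function.support_subset_iff'.2 fun j hj => by
      rw [coeff_logSeries_eq_zero hj, zero_mul]

theorem evalSum_logSeries_zero (hq : 1 < q) (ϖ : K) (e : ℕ → K) :
    evalSum (logSeries ϖ q e) 0 = 0 := by
  simp [evalSum_logSeries hq, (zero_lt_one.trans hq).ne']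

theorem norm_coeff_pow_logSeries_mul_pow (hq : 1 < q) (ϖ : K) (e : ℕ → K) (R : ℝ) (k : ℕ) :
    ‖coeff (q ^ k) (logSeries ϖ q e)‖ * R ^ q ^ k = ‖e k‖ * (R ^ q ^ k / ‖ϖ‖ ^ k) := by
  rw [coeff_pow_logSeries hq, norm_div, norm_pow, div_mul_eq_mul_div, mul_div_assoc]

theorem isRestricted_logSeries (hq : 1 < q) (he : ∀ k, ‖e k‖ ≤ 1) (hR0 : 0 ≤ R) (hR1 : R < 1) :
    IsRestricted R (logSeries ϖ q e) := by
  obtain ⟨m, hm⟩ := pow_unbounded_of_one_lt ‖ϖ‖⁻¹ (by exact_mod_cast hq : (1 : ℝ) < q)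
  refine isRestricted_of_norm_coeff_le_pow m hR0 hR1 fun j => ?_
  by_cases hj : j ∈ Set.range (q ^ ·)
  · obtain ⟨k, rfl⟩ := hj
    calc ‖coeff (q ^ k) (logSeries ϖ q e)‖ = ‖e k‖ * ‖ϖ‖⁻¹ ^ k := by
          rw [coeff_pow_logSeries hq, norm_div, norm_pow, inv_pow, div_eq_mul_inv]
      _ ≤ 1 * ((q : ℝ) ^ m) ^ k := by gcongr; exact he k
      _ = ((q ^ k : ℕ) : ℝ) ^ m := by rw [one_mul, Nat.cast_pow, pow_right_comm]
  · rw [coeff_logSeries_eq_zero hj, norm_zero]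
    positivity

theorem isDistinguished_logSeries (hϖ0 : ϖ ≠ 0) (hϖ1 : ‖ϖ‖ < 1) (hq : 1 < q)
    (he : ∀ k, ‖e k‖ ≤ 1) (hes : ‖e s‖ = 1) (hR0 : 0 < R) (hsR : criticalRadius ‖ϖ‖ q s ≤ R)
    (hRs : R < criticalRadius ‖ϖ‖ q (s + 1)) :
    IsDistinguished R (q ^ s) (logSeries ϖ q e) := by
  have hϖ : 0 < ‖ϖ‖ := norm_pos_iff.2 hϖ0
  have hmax : ‖coeff (q ^ s) (logSeries ϖ q e)‖ * R ^ q ^ s = R ^ q ^ s / ‖ϖ‖ ^ s := by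
    rw [norm_coeff_pow_logSeries_mul_pow hq, hes, one_mul]
  have hterm (k : ℕ) : ‖coeff (q ^ k) (logSeries ϖ q e)‖ * R ^ q ^ k ≤ R ^ q ^ k / ‖ϖ‖ ^ k := by
    rw [norm_coeff_pow_logSeries_mul_pow hq]
    exact mul_le_of_le_one_left (by positivity) (he k)
  have hR1 : R < 1 := hRs.trans (criticalRadius_lt_one hϖ.le hϖ1 hq (s + 1))
  refine ⟨isRestricted_logSeries hq he hR0.le hR1, fun j => ?_, fun j hj => ?_⟩ <;>
    rw [hmax] <;> by_cases hjq : j ∈ Set.range (q ^ ·)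
  · obtain ⟨k, rfl⟩ := hjq
    refine (hterm k).trans ?_
    rcases le_or_gt k s with hks | hsk
    · exact pow_pow_div_le_of_criticalRadius_le hϖ hϖ1 hq hsR hks
    · exact (pow_pow_div_lt_of_lt_criticalRadius hϖ hϖ1 hq hR0 hRs hsk).le
  · rw [coeff_logSeries_eq_zero hjq, norm_zero, zero_mul]
    positivity
  · obtain ⟨k, rfl⟩ := hjq
    exact (hterm k).trans_lt (pow_pow_div_lt_of_lt_criticalRadius hϖ hϖ1 hq hR0 hRs
      ((Nat.pow_lt_pow_iff_right hq).1 hj))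
  · rw [coeff_logSeries_eq_zero hjq, norm_zero, zero_mul]
    positivity

theorem isDistinguished_zero_of_norm_coeff_le_one {f : K⟦X⟧} (hR0 : 0 ≤ R) (hR1 : R < 1)
    (h0 : ‖coeff 0 f‖ = 1) (h : ∀ k, ‖coeff k f‖ ≤ 1) : IsDistinguished R 0 f where
  restricted := isRestricted_of_norm_coeff_le_pow 0 hR0 hR1 (by simpa using h)
  le k := by
    rw [h0, pow_zero, mul_one]
    exact mul_le_one₀ (h k) (by positivity) (pow_le_one₀ hR0 hR1.le)
  lt k hk := by
    rw [h0, pow_zero, mul_one]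
    exact (mul_le_of_le_one_left (by positivity) (h k)).trans_lt (pow_lt_one₀ hR0 hR1 hk.ne')

theorem isDistinguished_derivative_logSeries (hq : 1 < q) (hqϖ : ‖(q : K)‖ ≤ ‖ϖ‖)
    (he : ∀ k, ‖e k‖ ≤ 1) (he0 : ‖e 0‖ = 1) (hR0 : 0 ≤ R) (hR1 : R < 1) :
    IsDistinguished R 0 (derivative K (logSeries ϖ q e)) := by
  refine isDistinguished_zero_of_norm_coeff_le_one hR0 hR1 ?_ fun j => ?_
  · have hcoeff : coeff 1 (logSeries ϖ q e) = e 0 := by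
      simpa using coeff_pow_logSeries hq ϖ e 0
    rw [coeff_derivative, zero_add, hcoeff, Nat.cast_zero, zero_add, mul_one, he0]
  · rw [coeff_derivative]
    by_cases hj : j + 1 ∈ Set.range (q ^ ·)
    · obtain ⟨k, hk : q ^ k = j + 1⟩ := hj
      have hcast : ((j : K) + 1) = (q : K) ^ k := by
        rw [← Nat.cast_add_one, ← hk, Nat.cast_pow]
      rw [hcast, ← hk, coeff_pow_logSeries hq, div_mul_eq_mul_div, mul_div_assoc, ← div_pow,
        norm_mul, norm_pow, norm_div]
      exact mul_le_one₀ (he k) (by positivity)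
        (pow_le_one₀ (by positivity) (div_le_one_of_le₀ hqϖ (norm_nonneg ϖ)))
    · rw [coeff_logSeries_eq_zero hj, zero_mul, norm_zero]
      exact zero_le_one

variable [IsUltrametricDist K] [CompleteSpace K] [IsAlgClosed K]

theorem ncard_zeros_logSeries (hϖ0 : ϖ ≠ 0) (hϖ1 : ‖ϖ‖ < 1) (hq : 1 < q) (hqϖ : ‖(q : K)‖ ≤ ‖ϖ‖)
    (he : ∀ k, ‖e k‖ ≤ 1) (he0 : ‖e 0‖ = 1) (hes : ‖e s‖ = 1)
    (hsR : criticalRadius ‖ϖ‖ q s ≤ R) (hRs : R < criticalRadius ‖ϖ‖ q (s + 1)) :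
    {x | ‖x‖ ≤ R ∧ evalSum (logSeries ϖ q e) x = 0}.ncard = q ^ s := by
  have hϖ : 0 < ‖ϖ‖ := norm_pos_iff.2 hϖ0
  rcases ((criticalRadius_nonneg hϖ.le q s).trans hsR).eq_or_lt with rfl | hR0
  · have hs : s = 0 := by
      by_contra hs
      obtain ⟨s, rfl⟩ := Nat.exists_eq_succ_of_ne_zero hs
      exact hsR.not_gt (criticalRadius_succ_pos hϖ q s)
    have hzeros : {x | ‖x‖ ≤ 0 ∧ evalSum (logSeries ϖ q e) x = 0} = {0} := by
      ext x
      simpa using fun h : x = 0 => h ▸ evalSum_logSeries_zero hq ϖ e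
    rw [hzeros, Set.ncard_singleton, hs, pow_zero]
  · have hR1 : R < 1 := hRs.trans (criticalRadius_lt_one hϖ.le hϖ1 hq (s + 1))
    have hd := isDistinguished_derivative_logSeries hq hqϖ he he0 hR0.le hR1
    refine (isDistinguished_logSeries hϖ0 hϖ1 hq he hes hR0 hsR hRs).ncard_zeros hR0 fun x hx => ?_
    exact norm_pos_iff.1 (hd.norm_evalSum hx ▸ hd.norm_coeff_pos hR0.le)

theorem norm_le_criticalRadius_of_lt_succ (hϖ0 : ϖ ≠ 0) (hϖ1 : ‖ϖ‖ < 1) (hq : 1 < q)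
    (hqϖ : ‖(q : K)‖ ≤ ‖ϖ‖) (he : ∀ k, ‖e k‖ ≤ 1) (he0 : ‖e 0‖ = 1) (hes : ‖e s‖ = 1)
    (hx0 : evalSum (logSeries ϖ q e) x = 0) (hx : ‖x‖ < criticalRadius ‖ϖ‖ q (s + 1)) :
    ‖x‖ ≤ criticalRadius ‖ϖ‖ q s := by
  by_contra! hlt
  have hcard {R : ℝ} := ncard_zeros_logSeries (R := R) hϖ0 hϖ1 hq hqϖ he he0 hes
  have hlarge := hcard hlt.le hx
  have hsmall := hcard le_rfl (hlt.trans hx)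
  have hpos : 0 < q ^ s := pow_pos (zero_lt_one.trans hq) s
  have hsub : {y | ‖y‖ ≤ criticalRadius ‖ϖ‖ q s ∧ evalSum (logSeries ϖ q e) y = 0} ⊆
      {y | ‖y‖ ≤ ‖x‖ ∧ evalSum (logSeries ϖ q e) y = 0} :=
    fun y hy => ⟨hy.1.trans hlt.le, hy.2⟩
  have heq := Set.eq_of_subset_of_ncard_le hsub (hlarge.trans hsmall.symm).le
    (Set.finite_of_ncard_pos (hlarge ▸ hpos))
  have hmem : x ∈ {y | ‖y‖ ≤ criticalRadius ‖ϖ‖ q s ∧ evalSum (logSeries ϖ q e) y = 0} :=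
    heq ▸ ⟨le_rfl, hx0⟩
  exact hmem.1.not_gt hlt

theorem exists_norm_eq_criticalRadius (hϖ0 : ϖ ≠ 0) (hϖ1 : ‖ϖ‖ < 1) (hq : 1 < q)
    (hqϖ : ‖(q : K)‖ ≤ ‖ϖ‖) (he : ∀ k, ‖e k‖ ≤ 1) (hen : ∀ k ≤ n, ‖e k‖ = 1)
    (hx0 : evalSum (logSeries ϖ q e) x = 0) (hx : ‖x‖ ≤ criticalRadius ‖ϖ‖ q n) :
    ∃ s ≤ n, ‖x‖ = criticalRadius ‖ϖ‖ q s := by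
  induction n with
  | zero => exact ⟨0, le_rfl, le_antisymm hx (norm_nonneg x)⟩
  | succ n ih =>
    rcases hx.eq_or_lt with heq | hlt
    · exact ⟨n + 1, le_rfl, heq⟩
    · obtain ⟨s, hs, hxs⟩ := ih (fun k hk => hen k (hk.trans n.le_succ)) <|
        norm_le_criticalRadius_of_lt_succ hϖ0 hϖ1 hq hqϖ he (hen 0 (Nat.zero_le _))
          (hen n n.le_succ) hx0 hlt
      exact ⟨s, hs.trans n.le_succ, hxs⟩

theorem ncard_zeros_norm_eq_criticalRadius_succ (hϖ0 : ϖ ≠ 0) (hϖ1 : ‖ϖ‖ < 1) (hq : 1 < q)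
    (hqϖ : ‖(q : K)‖ ≤ ‖ϖ‖) (he : ∀ k, ‖e k‖ ≤ 1) (he0 : ‖e 0‖ = 1) (hes : ‖e s‖ = 1)
    (hes' : ‖e (s + 1)‖ = 1) :
    {x | evalSum (logSeries ϖ q e) x = 0 ∧ ‖x‖ = criticalRadius ‖ϖ‖ q (s + 1)}.ncard =
      q ^ (s + 1) - q ^ s := by
  have hmono := strictMono_criticalRadius (norm_pos_iff.2 hϖ0) hϖ1 hq
  have hlt (t : ℕ) : criticalRadius ‖ϖ‖ q t < criticalRadius ‖ϖ‖ q (t + 1) :=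
    hmono t.lt_succ_self
  have hsmall := ncard_zeros_logSeries hϖ0 hϖ1 hq hqϖ he he0 hes le_rfl (hlt s)
  have hlarge := ncard_zeros_logSeries hϖ0 hϖ1 hq hqϖ he he0 hes' le_rfl (hlt (s + 1))
  have hcircle : {x | evalSum (logSeries ϖ q e) x = 0 ∧ ‖x‖ = criticalRadius ‖ϖ‖ q (s + 1)} =
      {x | ‖x‖ ≤ criticalRadius ‖ϖ‖ q (s + 1) ∧ evalSum (logSeries ϖ q e) x = 0} \
        {x | ‖x‖ ≤ criticalRadius ‖ϖ‖ q s ∧ evalSum (logSeries ϖ q e) x = 0} := by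
    ext x
    constructor
    · rintro ⟨hx0, hx⟩
      exact ⟨⟨hx.le, hx0⟩, fun h => (hx ▸ h.1).not_gt (hlt s)⟩
    · rintro ⟨⟨hx, hx0⟩, hnot⟩
      exact ⟨hx0, hx.eq_of_not_lt fun hx' => hnot
        ⟨norm_le_criticalRadius_of_lt_succ hϖ0 hϖ1 hq hqϖ he he0 hes hx0 hx', hx0⟩⟩
  have hpos : 0 < q ^ s := pow_pos (zero_lt_one.trans hq) s
  have hsub : {x | ‖x‖ ≤ criticalRadius ‖ϖ‖ q s ∧ evalSum (logSeries ϖ q e) x = 0} ⊆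
      {x | ‖x‖ ≤ criticalRadius ‖ϖ‖ q (s + 1) ∧ evalSum (logSeries ϖ q e) x = 0} :=
    fun x hx => ⟨hx.1.trans (hlt s).le, hx.2⟩
  rw [hcircle, Set.ncard_sdiff hsub (Set.finite_of_ncard_pos (hsmall ▸ hpos)), hlarge,
    hsmall]

end LogSeries

theorem newton_polygon_torsion_count_general
    {K : Type*} [NormedField K] [IsUltrametricDist K] [CompleteSpace K] [IsAlgClosed K]
    {ϖ : K} (hϖ0 : ϖ ≠ 0) (hϖ1 : ‖ϖ‖ < 1) {q : ℕ} (hq : 1 < q) (hqϖ : ‖(q : K)‖ ≤ ‖ϖ‖)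
    {n : ℕ} (hn : 1 ≤ n) {e : ℕ → K} (he : ∀ k, ‖e k‖ ≤ 1) (hen : ∀ k ≤ n, ‖e k‖ = 1) :
    Nat.card {x : K //
        ‖x‖ ≤ ‖ϖ‖ ^ ((1 : ℝ) / ((q : ℝ) ^ n - (q : ℝ) ^ (n - 1))) ∧
        (∑' k : ℕ, e k / ϖ ^ k * x ^ q ^ k) = 0} = q ^ n ∧
    (∀ x : K,
        ‖x‖ ≤ ‖ϖ‖ ^ ((1 : ℝ) / ((q : ℝ) ^ n - (q : ℝ) ^ (n - 1))) →
        (∑' k : ℕ, e k / ϖ ^ k * x ^ q ^ k) = 0 → x ≠ 0 →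
        ∃ s : ℕ, 1 ≤ s ∧ s ≤ n ∧
          ‖x‖ = ‖ϖ‖ ^ ((1 : ℝ) / ((q : ℝ) ^ s - (q : ℝ) ^ (s - 1)))) ∧
    ∀ s : ℕ, 1 ≤ s → s ≤ n →
      Nat.card {x : K //
          (∑' k : ℕ, e k / ϖ ^ k * x ^ q ^ k) = 0 ∧
          ‖x‖ = ‖ϖ‖ ^ ((1 : ℝ) / ((q : ℝ) ^ s - (q : ℝ) ^ (s - 1)))} =
        q ^ s - q ^ (s - 1) := by
  have he0 : ‖e 0‖ = 1 := hen 0 (Nat.zero_le n)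
  have hmono := strictMono_criticalRadius (norm_pos_iff.2 hϖ0) hϖ1 hq
  simp only [← evalSum_logSeries hq]
  rw [← criticalRadius_of_one_le _ _ hn]
  refine ⟨?_, fun x hx hx0 hne => ?_, fun s hs hsn => ?_⟩
  · exact ncard_zeros_logSeries hϖ0 hϖ1 hq hqϖ he he0 (hen n le_rfl) le_rfl (hmono n.lt_succ_self)
  · obtain ⟨s, hsn, hxs⟩ := exists_norm_eq_criticalRadius hϖ0 hϖ1 hq hqϖ he hen hx0 hx
    have hs : 1 ≤ s := by
      refine Nat.one_le_iff_ne_zero.2 fun hs => hne (norm_eq_zero.1 ?_)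
      rw [hxs, hs, criticalRadius]
    exact ⟨s, hs, hsn, hxs.trans (criticalRadius_of_one_le _ _ hs)⟩
  · rw [← criticalRadius_of_one_le _ _ hs]
    obtain ⟨s, rfl⟩ := Nat.exists_eq_add_of_le' hs
    exact ncard_zeros_norm_eq_criticalRadius_succ hϖ0 hϖ1 hq hqϖ he he0
      (hen s (by omega)) (hen (s + 1) hsn)

/-- Let `l(X) = ∑_{k≥0} (e_k/p^k) X^{p^k}` with all
`e_k ∈ O_K^*` (i.e. `‖e k‖ = 1`).  We work in a field `Ω` containing all the
relevant roots ("a sufficiently large extension": a complete algebraically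
closed ultrametric field with `‖p‖ = 1/p`, e.g. `ℂ_p`), and set
`T_n = {π : ‖π‖ ≤ |p|^{1/(p^n − p^{n−1})}, l(π) = 0}`.  Then:
`|T_n| = p^n`; every nonzero `π ∈ T_n` has `‖π‖ = |p|^{1/(p^s − p^{s−1})}`
for some `1 ≤ s ≤ n`; and for each such `s` the number of `π ∈ T_n` with
`‖π‖ = |p|^{1/(p^s − p^{s−1})}` is exactly `p^s − p^{s−1}`. -/
theorem newton_polygon_torsion_count
    (p : ℕ) (hp : p.Prime)
    (Ω : Type*) [NontriviallyNormedField Ω] [IsUltrametricDist Ω]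
    [CompleteSpace Ω] [IsAlgClosed Ω] [CharZero Ω]
    (hpΩ : ‖(p : Ω)‖ = (p : ℝ)⁻¹)
    (e : ℕ → Ω) (he : ∀ k, ‖e k‖ = 1)
    (n : ℕ) (hn : 1 ≤ n) :
    Nat.card {π : Ω //
        ‖π‖ ≤ ‖(p : Ω)‖ ^ ((1 : ℝ) / ((p : ℝ) ^ n - (p : ℝ) ^ (n - 1))) ∧
        (∑' k : ℕ, e k / (p : Ω) ^ k * π ^ p ^ k) = 0} = p ^ n ∧
    (∀ π : Ω,
        ‖π‖ ≤ ‖(p : Ω)‖ ^ ((1 : ℝ) / ((p : ℝ) ^ n - (p : ℝ) ^ (n - 1))) →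
        (∑' k : ℕ, e k / (p : Ω) ^ k * π ^ p ^ k) = 0 → π ≠ 0 →
        ∃ s : ℕ, 1 ≤ s ∧ s ≤ n ∧
          ‖π‖ = ‖(p : Ω)‖ ^ ((1 : ℝ) / ((p : ℝ) ^ s - (p : ℝ) ^ (s - 1)))) ∧
    ∀ s : ℕ, 1 ≤ s → s ≤ n →
      Nat.card {π : Ω //
          (∑' k : ℕ, e k / (p : Ω) ^ k * π ^ p ^ k) = 0 ∧
          ‖π‖ = ‖(p : Ω)‖ ^ ((1 : ℝ) / ((p : ℝ) ^ s - (p : ℝ) ^ (s - 1)))} =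
        p ^ s - p ^ (s - 1) := by
  have hp0 : (p : Ω) ≠ 0 := Nat.cast_ne_zero.2 hp.ne_zero
  have hp1 : ‖(p : Ω)‖ < 1 := hpΩ ▸ inv_lt_one_of_one_lt₀ (by exact_mod_cast hp.one_lt)
  exact newton_polygon_torsion_count_general hp0 hp1 hp.one_lt le_rfl hn (fun k => (he k).le)
    fun k _ => he k
end
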